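/- arXiv:math/9607207 — 2 statements merged into one kernel-verified Lean document; each statement's English description precedes it below -/
import Mathlib

section
/- Let X be a Banach space with a Schauder basis (e_i). If X contains no subspace isomorphic to ℓ₁ and no subspace isomorphic to c₀, then there exists a normalized block basis of (e_i) having a spreading model (s_i) with 1 < ‖s_1 + s_2‖ < 2. -/
/-!
Suppose that no normalized block basis has a spreading model with `1 < ‖s 0 + s 1‖ < 2`. By Ramsey's
theorem every normalized block sequence has a subsequence with a spreading model (Brunel and
Sucheston, `exists_spreadingModel`), so it has a subsequence `y` for which `‖y n + y m‖` converges,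
as `n < m` go to infinity, to a limit that is at most `1` or equal to `2` (`extremal_of_not`).

The two alternatives cannot coexist. Given normalized block sequences `y` and `z`, one may interleave
them and move from `y n` to `z n` along a segment that stays away from `0`; small changes of the
sequence change the limit of the pair sums little, so the limit cannot jump (`Extremal.transfer`).
Hence either every normalized block sequence has a subsequence with limit `2`, or every one has a
subsequence with limit at most `1` (`Extremal.dichotomy`).

If the limits are at most `1`, then `c₀` embeds. Consider finite sets `F` with `‖∑ i ∈ F, x i‖` close
to `1`: far-apart pairs of such sets have unions of the same kind, up to passing to subsequences. A
family of this sort is treated abstractly as a `BlockSystem`, and diagonalizing over countably many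
closed dense properties (`BlockSystem.exists_pairs`) shows that an infinite set has all its initial
sums bounded by `2 * K` (`SmallPairs.exists_partial`). This applies to every subsequence, so
Galvin's lemma (`galvin`) gives a subsequence all of whose finite sums are bounded, and such a
normalized block sequence spans `c₀` (`SmallPairs.exists_c0`).

If the limits are `2`, then `ℓ₁` embeds. Now the block system consists of convex combinations of
norm close to `1`, closed under averaging. Applied to the normalized differences
`x (2 * j) - x (2 * j + 1)`, it shows that for some gap `[r - η, r + η]` there are infinitely many `j`
such that any finitely many of the pairs are separated across the gap by one functional of norm at
most `1`; otherwise some convex combination would give small mass to every separated set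
(`dense_small`), while a norming functional of it separates a set of large mass
(`exists_separated`). Galvin's lemma turns this into alternation of functionals along all finite
subsets of an infinite set (`exists_alt`), which is Rosenthal's criterion for the odd-numbered terms
to span `ℓ₁` (`Alt.lower`, `exists_l1`).
-/

noncomputable section

/-- A basic sequence: there is a constant `C` dominating all projections onto
initial segments. -/
def IsBasicSeq {S : Type*} [NormedAddCommGroup S] [NormedSpace ℝ S] (s : ℕ → S) : Prop :=
  ∃ C : ℝ, ∀ m n : ℕ, m ≤ n → ∀ a : ℕ → ℝ,
    ‖∑ i ∈ Finset.range m, a i • s i‖ ≤ C * ‖∑ i ∈ Finset.range n, a i • s i‖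

/-- `s` is a spreading model of `x`. -/
def IsSpreadingModel {X : Type*} [NormedAddCommGroup X] [NormedSpace ℝ X]
    {S : Type*} [NormedAddCommGroup S] [NormedSpace ℝ S]
    (x : ℕ → X) (s : ℕ → S) : Prop :=
  IsBasicSeq s ∧
  ∃ ε : ℕ → ℝ, (∀ n, 0 < ε n) ∧ Antitone ε ∧ Filter.Tendsto ε Filter.atTop (nhds 0) ∧
    ∀ (n : ℕ) (a : Fin n → ℝ), (∀ i, |a i| ≤ 1) →
      ∀ k : Fin n → ℕ, StrictMono k → (∀ i, n ≤ k i) →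
        |‖∑ i, a i • x (k i)‖ - ‖∑ i, a i • s i‖| < ε n

/-- `e` is a Schauder basis of `X`: every vector has a unique representation as a
norm-convergent series. -/
def IsSchauderBasis {X : Type*} [NormedAddCommGroup X] [NormedSpace ℝ X] (e : ℕ → X) : Prop :=
  ∀ x : X, ∃! a : ℕ → ℝ,
    Filter.Tendsto (fun n => ∑ i ∈ Finset.range n, a i • e i) Filter.atTop (nhds x)

/-- `y` is a block basis of the basis `e`: `y j = ∑_{i ∈ E j} a i • e i` with the
finite sets `E j` nonempty and successive (`max E j < min E (j+1)`), and `y j ≠ 0`. -/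
def IsBlockBasis {X : Type*} [NormedAddCommGroup X] [NormedSpace ℝ X]
    (e : ℕ → X) (y : ℕ → X) : Prop :=
  ∃ (E : ℕ → Finset ℕ) (a : ℕ → ℝ),
    (∀ j, (E j).Nonempty) ∧
    (∀ j, ∀ p ∈ E j, ∀ q ∈ E (j + 1), p < q) ∧
    (∀ j, y j = ∑ i ∈ E j, a i • e i) ∧
    (∀ j, y j ≠ 0)

noncomputable section
open Filter Topology

/-! ### Ramsey-type combinatorics on `ℕ` -/

/-- Fusion along a free ultrafilter: given `U`-large sets `A t`, there is an infinite set whose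
`k`-th element lies in `A t` for every set `t` of earlier elements. -/
lemma fusion (U : Ultrafilter ℕ) (hU : (U : Filter ℕ) ≤ atTop) (A : Finset ℕ → Set ℕ)
    (hA : ∀ t, A t ∈ U) :
    ∃ φ : ℕ → ℕ, StrictMono φ ∧ ∀ k, ∀ t ⊆ (Finset.range k).image φ, φ k ∈ A t := by
  classical
  have h : ∀ s : Finset ℕ, ∃ c, (∀ t ∈ s.powerset, c ∈ A t) ∧ ∀ i ∈ s, i < c := by
    intro s
    have h1 : (⋂ t ∈ s.powerset, A t) ∈ (U : Filter ℕ) :=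
      (biInter_finset_mem _).2 fun t _ => hA t
    have h2 : (⋂ i ∈ s, Set.Ioi i) ∈ (U : Filter ℕ) :=
      (biInter_finset_mem _).2 fun i _ => hU (Ioi_mem_atTop i)
    obtain ⟨c, hc1, hc2⟩ := (U : Filter ℕ).nonempty_of_mem (inter_mem h1 h2)
    simp only [Set.mem_iInter] at hc1 hc2
    exact ⟨c, hc1, hc2⟩
  choose c hc1 hc2 using h
  let F : ℕ → Finset ℕ := fun k => Nat.rec ∅ (fun _ s => insert (c s) s) k
  have hF : ∀ k, F (k + 1) = insert (c (F k)) (F k) := fun k => rfl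
  have hFim : ∀ k, F k = (Finset.range k).image (fun j => c (F j)) := by
    intro k
    induction k with
    | zero => rfl
    | succ k ih => rw [hF, Finset.range_add_one, Finset.image_insert, ← ih]
  refine ⟨fun k => c (F k), strictMono_nat_of_lt_succ fun k => ?_, fun k t ht => ?_⟩
  · exact hc2 _ _ (by rw [hF]; exact Finset.mem_insert_self _ _)
  · exact hc1 _ _ (by rw [Finset.mem_powerset, hFim]; exact ht)

/-- The finite sets from which, playing along the ultrafilter `U`, one is forced into `𝓕`. -/
inductive Forced (U : Ultrafilter ℕ) (𝓕 : Set (Finset ℕ)) : Finset ℕ → Prop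
  | base (s : Finset ℕ) : s ∈ 𝓕 → Forced U 𝓕 s
  | step (s : Finset ℕ) (A : Set ℕ) : A ∈ U → (∀ n ∈ A, Forced U 𝓕 (insert n s)) → Forced U 𝓕 s

lemma Forced.strategy {U : Ultrafilter ℕ} {𝓕 : Set (Finset ℕ)} {s : Finset ℕ}
    (h : Forced U 𝓕 s) : ∃ A : Finset ℕ → Set ℕ, (∀ t, A t ∈ U) ∧
      ∀ ψ : ℕ → ℕ, StrictMono ψ → ∀ k, (Finset.range k).image ψ = s →
        (∀ m, k ≤ m → ψ m ∈ A ((Finset.range m).image ψ)) →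
          ∃ n, (Finset.range n).image ψ ∈ 𝓕 := by
  classical
  induction h with
  | base s hs => exact ⟨fun _ => Set.univ, fun _ => univ_mem, fun ψ _ k hk _ => ⟨k, hk ▸ hs⟩⟩
  | step s A hA _ ih =>
    choose! B hB1 hB2 using ih
    refine ⟨fun t => A ∩ ⋂ n ∈ t, (if n ∈ A then B n t else Set.univ), fun t => ?_, ?_⟩
    · refine inter_mem hA ((biInter_finset_mem _).2 fun n _ => ?_)
      split_ifs with hn
      · exact hB1 n hn t
      · exact univ_mem
    · intro ψ hψ k hk hm
      have hkA : ψ k ∈ A := (hm k le_rfl).1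
      refine hB2 (ψ k) hkA ψ hψ (k + 1) ?_ fun m hkm => ?_
      · rw [Finset.range_add_one, Finset.image_insert, hk]
      · have h1 := (hm m (by omega)).2
        simp only [Set.mem_iInter] at h1
        have h2 := h1 (ψ k) (Finset.mem_image_of_mem _ (Finset.mem_range.2 (by omega)))
        rwa [if_pos hkA] at h2

/-- **Galvin's lemma**: some infinite set either has no finite subset in `𝓕`, or all its infinite
subsets have an initial segment in `𝓕`. -/
lemma galvin (𝓕 : Set (Finset ℕ)) : ∃ φ : ℕ → ℕ, StrictMono φ ∧
    ((∀ F : Finset ℕ, F.image φ ∉ 𝓕) ∨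
      ∀ ψ : ℕ → ℕ, StrictMono ψ → ∃ n, (Finset.range n).image (φ ∘ ψ) ∈ 𝓕) := by
  classical
  let U : Ultrafilter ℕ := Ultrafilter.of atTop
  have hU : (U : Filter ℕ) ≤ atTop := Ultrafilter.of_le _
  by_cases h : Forced U 𝓕 ∅
  · obtain ⟨A, hA, hA'⟩ := h.strategy
    obtain ⟨φ, hφ, hφA⟩ := fusion U hU A hA
    refine ⟨φ, hφ, Or.inr fun ψ hψ => hA' (φ ∘ ψ) (hφ.comp hψ) 0 (by simp) fun m _ => ?_⟩
    refine hφA (ψ m) _ ?_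
    intro x hx
    simp only [Finset.mem_image, Finset.mem_range, Function.comp] at hx ⊢
    obtain ⟨a, ha, rfl⟩ := hx
    exact ⟨ψ a, hψ ha, rfl⟩
  · let B : Finset ℕ → Set ℕ := fun t =>
      if Forced U 𝓕 t then Set.univ else {n | ¬ Forced U 𝓕 (insert n t)}
    have hB : ∀ t, B t ∈ U := by
      intro t
      by_cases ht : Forced U 𝓕 t
      · simp only [B, if_pos ht]; exact univ_mem
      · simp only [B, if_neg ht]
        by_contra hc
        rw [← Ultrafilter.compl_mem_iff_notMem] at hc
        refine ht (Forced.step t _ hc fun n hn => ?_)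
        simpa using hn
    obtain ⟨φ, hφ, hφB⟩ := fusion U hU B hB
    refine ⟨φ, hφ, Or.inl fun F => ?_⟩
    suffices hs : ¬ Forced U 𝓕 (F.image φ) from fun hF => hs (Forced.base _ hF)
    induction F using Finset.induction_on_max with
    | empty => simpa using h
    | insert a s hs ih =>
      have h1 : φ a ∈ B (s.image φ) :=
        hφB a _ (Finset.image_subset_image fun x hx => Finset.mem_range.2 (hs x hx))
      simp only [B, if_neg ih] at h1
      rw [Finset.image_insert]
      exact h1

/-- Infinite Ramsey theorem for finitely many colours, deduced from Galvin's lemma. -/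
lemma ramsey {C : Type*} (n : ℕ) (T : Finset C) (col : Finset ℕ → C)
    (hT : ∀ F : Finset ℕ, F.card = n → col F ∈ T) :
    ∃ φ : ℕ → ℕ, StrictMono φ ∧ ∃ c, ∀ F : Finset ℕ, F.card = n → col (F.image φ) = c := by
  classical
  have key : ∀ T' : Finset C, ∃ φ : ℕ → ℕ, StrictMono φ ∧
      ((∃ c, ∀ F : Finset ℕ, F.card = n → col (F.image φ) = c) ∨
        ∀ F : Finset ℕ, F.card = n → col (F.image φ) ∉ T') := by
    intro T'
    induction T' using Finset.induction_on with
    | empty => exact ⟨id, strictMono_id, Or.inr fun F _ => by simp⟩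
    | insert c T' _ ih =>
      obtain ⟨φ, hφ, h | h⟩ := ih
      · exact ⟨φ, hφ, Or.inl h⟩
      obtain ⟨θ, hθ, h2 | h2⟩ := galvin {F | F.card = n ∧ col (F.image φ) = c}
      · refine ⟨φ ∘ θ, hφ.comp hθ, Or.inr fun F hF => ?_⟩
        have hc : (F.image θ).card = n := by rw [Finset.card_image_of_injective _ hθ.injective, hF]
        have h3 := h2 F
        simp only [Set.mem_ofPred_eq, hc, true_and] at h3
        rw [← Finset.image_image, Finset.mem_insert, not_or]
        exact ⟨h3, h _ hc⟩
      · refine ⟨φ ∘ θ, hφ.comp hθ, Or.inl ⟨c, fun F hF => ?_⟩⟩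
        -- extend `F` to an infinite set having `F` as an initial segment
        let m := F.sup id + 1
        have hFm : ∀ x ∈ F, x < m := fun x hx => Nat.lt_succ_of_le (Finset.le_sup (f := id) hx)
        let ψ : ℕ → ℕ := fun i => if h : i < n then F.orderEmbOfFin hF ⟨i, h⟩ else m + i
        have hψ : StrictMono ψ := by
          intro i j hij
          by_cases hj : j < n
          · have hi : i < n := by omega
            simp only [ψ, dif_pos hi, dif_pos hj]
            exact (F.orderEmbOfFin hF).strictMono (by simpa using hij)
          · by_cases hi : i < n
            · simp only [ψ, dif_pos hi, dif_neg hj]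
              have := hFm _ (F.orderEmbOfFin_mem hF ⟨i, hi⟩)
              omega
            · simp only [ψ, dif_neg hi, dif_neg hj]; omega
        obtain ⟨k, hk1, hk2⟩ := h2 ψ hψ
        have hkn : k = n := by
          rw [Finset.card_image_of_injective _ (hθ.comp hψ).injective, Finset.card_range] at hk1
          exact hk1
        subst hkn
        have himg : (Finset.range k).image ψ = F := by
          apply Finset.eq_of_subset_of_card_le
          · intro x hx
            simp only [Finset.mem_image, Finset.mem_range] at hx
            obtain ⟨a, ha, rfl⟩ := hx
            simp only [ψ, dif_pos ha]
            exact F.orderEmbOfFin_mem hF _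
          · rw [Finset.card_image_of_injective _ hψ.injective, Finset.card_range, hF]
        rw [← Finset.image_image, himg, Finset.image_image] at hk2
        exact hk2
  obtain ⟨φ, hφ, h | h⟩ := key T
  · exact ⟨φ, hφ, h⟩
  · exact absurd (hT ((Finset.range n).image φ)
      (by rw [Finset.card_image_of_injective _ hφ.injective, Finset.card_range]))
      (h (Finset.range n) (by simp))

/-- Diagonalization of properties that every subsequence can be refined to have. -/
lemma diagonal (Q : ℕ → (ℕ → ℕ) → Prop)
    (dense : ∀ n (θ : ℕ → ℕ), StrictMono θ → ∃ φ : ℕ → ℕ, StrictMono φ ∧ Q n (θ ∘ φ))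
    (hered : ∀ n (θ φ : ℕ → ℕ), StrictMono θ → StrictMono φ → Q n θ → Q n (θ ∘ φ)) :
    ∃ Φ : ℕ → ℕ, StrictMono Φ ∧ ∀ n, Q n (fun j => Φ (n + j)) := by
  choose! f hf1 hf2 using dense
  let Θ : ℕ → ℕ → ℕ := fun n => Nat.rec (f 0 id) (fun k θ => θ ∘ f (k + 1) θ) n
  have hΘ : ∀ n, Θ (n + 1) = Θ n ∘ f (n + 1) (Θ n) := fun n => rfl
  have hmono : ∀ n, StrictMono (Θ n) := by
    intro n
    induction n with
    | zero => exact hf1 0 id strictMono_id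
    | succ n ih => rw [hΘ]; exact ih.comp (hf1 _ _ ih)
  have hQ : ∀ n, Q n (Θ n) := by
    intro n
    cases n with
    | zero => exact hf2 0 id strictMono_id
    | succ n => rw [hΘ]; exact hf2 _ _ (hmono n)
  have hsub : ∀ n k i, ∃ i', i ≤ i' ∧ Θ (n + k) i = Θ n i' := by
    intro n k
    induction k with
    | zero => exact fun i => ⟨i, le_rfl, rfl⟩
    | succ k ih =>
      intro i
      obtain ⟨i', h1, h2⟩ := ih (f (n + k + 1) (Θ (n + k)) i)
      exact ⟨i', ((hf1 _ _ (hmono _)).le_apply).trans h1, h2⟩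
  have hΦ : StrictMono fun k => Θ k k := by
    refine strictMono_nat_of_lt_succ fun k => ?_
    obtain ⟨i', h1, h2⟩ := hsub k 1 (k + 1)
    simp only [h2]
    exact hmono k (by omega)
  refine ⟨fun k => Θ k k, hΦ, fun n => ?_⟩
  choose ρ _ hρ using fun j => hsub n j (n + j)
  have hρm : StrictMono ρ := by
    intro a b hab
    rw [← (hmono n).lt_iff_lt, ← hρ, ← hρ]
    exact hΦ (by omega)
  have : (fun j => Θ (n + j) (n + j)) = Θ n ∘ ρ := funext fun j => hρ j
  rw [this]
  exact hered n _ _ (hmono n) hρm (hQ n)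
end

noncomputable section
open Filter Topology

/-! ### The basis constant -/

section BasisConstant

variable {X : Type*} [NormedAddCommGroup X] [NormedSpace ℝ X]

/-- The span of the basis vectors with index in `[a, b)`. -/
def blockSpan (e : ℕ → X) (a b : ℕ) : Submodule ℝ X := Submodule.span ℝ (e '' Set.Ico a b)

lemma mem_blockSpan {e : ℕ → X} {a b : ℕ} {x : X} (h : x ∈ blockSpan e a b) :
    ∃ c : ℕ → ℝ, x = ∑ i ∈ Finset.Ico a b, c i • e i := by
  have h' : x ∈ Submodule.span ℝ (e '' (Finset.Ico a b : Finset ℕ)) := by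
    simpa [blockSpan] using h
  obtain ⟨c, hc⟩ := Submodule.mem_span_image_finset_iff_exists_fun ℝ |>.1 h'
  refine ⟨fun i => if h : i ∈ Finset.Ico a b then c ⟨i, h⟩ else 0, ?_⟩
  rw [← hc, ← Finset.sum_coe_sort (Finset.Ico a b)]
  refine Finset.sum_congr rfl fun i _ => ?_
  have hi : (i : ℕ) ∈ Finset.Ico a b := i.2
  simp only [dif_pos hi]

lemma blockSpan_mono {e : ℕ → X} {a b a' b' : ℕ} (h1 : a' ≤ a) (h2 : b ≤ b') :
    blockSpan e a b ≤ blockSpan e a' b' :=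
  Submodule.span_mono (Set.image_mono (Set.Ico_subset_Ico h1 h2))

/-- `K` bounds the norms of all initial projections of the sequence `e`. -/
def BasisConst (e : ℕ → X) (K : ℝ) : Prop :=
  1 ≤ K ∧ ∀ (m n : ℕ) (u v : X), u ∈ blockSpan e 0 m → v ∈ blockSpan e m n → ‖u‖ ≤ K * ‖u + v‖

/-- The space of convergent sequences of partial sums `∑_{i<n} a i • e i`, with the sup norm. -/
def partialSums (e : ℕ → X) : Submodule ℝ (BoundedContinuousFunction ℕ X) where
  carrier := {S | S 0 = 0 ∧ (∀ n, S (n + 1) - S n ∈ Submodule.span ℝ {e n}) ∧ CauchySeq S}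
  add_mem' := by
    rintro S T ⟨h1, h2, h3⟩ ⟨h1', h2', h3'⟩
    refine ⟨by simp [h1, h1'], fun n => ?_, h3.add h3'⟩
    have := Submodule.add_mem _ (h2 n) (h2' n)
    simpa [sub_add_sub_comm] using this
  zero_mem' := ⟨rfl, fun n => by simp, cauchySeq_const 0⟩
  smul_mem' := by
    rintro c S ⟨h1, h2, h3⟩
    refine ⟨by simp [h1], fun n => ?_, ?_⟩
    · have := Submodule.smul_mem _ c (h2 n)
      simpa [smul_sub] using this
    · exact (uniformContinuous_const_smul c).comp_cauchySeq h3

lemma isClosed_partialSums (e : ℕ → X) :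
    IsClosed (partialSums e : Set (BoundedContinuousFunction ℕ X)) := by
  have hev : ∀ n, Continuous fun S : BoundedContinuousFunction ℕ X => S n := fun n =>
    (BoundedContinuousFunction.lipschitz_eval_const n).continuous
  have h1 : IsClosed {S : BoundedContinuousFunction ℕ X | S 0 = 0} :=
    isClosed_eq (hev 0) continuous_const
  have h2 : IsClosed {S : BoundedContinuousFunction ℕ X |
      ∀ n, S (n + 1) - S n ∈ Submodule.span ℝ {e n}} := by
    simp only [Set.ofPred_forall]
    exact isClosed_iInter fun n =>
      (Submodule.closed_of_finiteDimensional (Submodule.span ℝ {e n})).preimage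
        ((hev (n + 1)).sub (hev n))
  have h3 : IsClosed {S : BoundedContinuousFunction ℕ X | CauchySeq S} := by
    rw [← isSeqClosed_iff_isClosed]
    intro S T hS hT
    rw [Set.mem_ofPred_eq, Metric.cauchySeq_iff']
    intro ε hε
    obtain ⟨k, hk⟩ := (Metric.tendsto_atTop.1 hT (ε / 3) (by positivity))
    have hk := hk k le_rfl
    obtain ⟨N, hN⟩ := Metric.cauchySeq_iff'.1 (hS k) (ε / 3) (by positivity)
    refine ⟨N, fun n hn => ?_⟩
    have a1 := BoundedContinuousFunction.dist_coe_le_dist (f := S k) (g := T) n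
    have a2 := BoundedContinuousFunction.dist_coe_le_dist (f := S k) (g := T) N
    have a3 := hN n hn
    have t1 := dist_triangle4 (T n) (S k n) (S k N) (T N)
    rw [dist_comm (T n) (S k n)] at t1
    linarith
  exact (h1.inter (h2.inter h3))

lemma exists_basisConst [CompleteSpace X] {e : ℕ → X} (he : IsSchauderBasis e) :
    ∃ K, BasisConst e K := by
  classical
  have : CompleteSpace (partialSums e) := (isClosed_partialSums e).completeSpace_coe
  have hlim : ∀ S : partialSums e, ∃ x, Tendsto (S : BoundedContinuousFunction ℕ X) atTop (𝓝 x) :=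
    fun S => cauchySeq_tendsto_of_complete S.2.2.2
  choose lim hlim using hlim
  let T0 : partialSums e →ₗ[ℝ] X :=
    { toFun := lim
      map_add' := fun S T => tendsto_nhds_unique (hlim (S + T)) ((hlim S).add (hlim T))
      map_smul' := fun c S => tendsto_nhds_unique (hlim (c • S)) ((hlim S).const_smul c) }
  let T : partialSums e →L[ℝ] X := T0.mkContinuous 1 fun S => by
    rw [one_mul]
    exact le_of_tendsto (hlim S).norm (Eventually.of_forall fun n =>
      BoundedContinuousFunction.norm_coe_le_norm _ n)
  have hT : ∀ S : partialSums e, Tendsto (S : BoundedContinuousFunction ℕ X) atTop (𝓝 (T S)) :=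
    fun S => hlim S
  have hcoef : ∀ S : partialSums e, ∃ a : ℕ → ℝ, ∀ n,
      (S : BoundedContinuousFunction ℕ X) n = ∑ i ∈ Finset.range n, a i • e i := by
    intro S
    choose a ha using fun n => Submodule.mem_span_singleton.1 (S.2.2.1 n)
    refine ⟨a, fun n => ?_⟩
    induction n with
    | zero => simpa using S.2.1
    | succ n ih => rw [Finset.sum_range_succ, ← ih, ha]; abel
  have hmk : ∀ (a : ℕ → ℝ) (x : X),
      Tendsto (fun n => ∑ i ∈ Finset.range n, a i • e i) atTop (𝓝 x) →
      ∃ S : partialSums e, (∀ n, (S : BoundedContinuousFunction ℕ X) n =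
        ∑ i ∈ Finset.range n, a i • e i) ∧ T S = x := by
    intro a x hx
    obtain ⟨C, hC⟩ := isBounded_iff_forall_norm_le.1 (Metric.isBounded_range_of_tendsto _ hx)
    let S : BoundedContinuousFunction ℕ X := BoundedContinuousFunction.ofNormedAddCommGroupDiscrete
      (fun n => ∑ i ∈ Finset.range n, a i • e i) C (fun n => hC _ ⟨n, rfl⟩)
    have hS : S ∈ partialSums e := by
      refine ⟨by simp [S], fun n => ?_, hx.cauchySeq⟩
      simp only [S, BoundedContinuousFunction.coe_ofNormedAddCommGroupDiscrete,
        Finset.sum_range_succ, add_sub_cancel_left]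
      exact Submodule.smul_mem _ _ (Submodule.mem_span_singleton_self _)
    exact ⟨⟨S, hS⟩, fun n => rfl, tendsto_nhds_unique (hT ⟨S, hS⟩) hx⟩
  have hinj : Function.Injective T := by
    rw [injective_iff_map_eq_zero]
    intro S hS
    obtain ⟨a, ha⟩ := hcoef S
    have h1 : Tendsto (fun n => ∑ i ∈ Finset.range n, a i • e i) atTop (𝓝 0) := by
      have := hT S
      rw [hS] at this
      exact this.congr ha
    have h2 : Tendsto (fun n => ∑ i ∈ Finset.range n, (0 : ℕ → ℝ) i • e i) atTop (𝓝 0) := by simp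
    have h3 : a = 0 := (he 0).unique h1 h2
    ext n
    rw [ha n, h3]
    simp
  have hsurj : Function.Surjective T := by
    intro x
    obtain ⟨a, ha, _⟩ := he x
    obtain ⟨S, _, hS⟩ := hmk a x ha
    exact ⟨S, hS⟩
  let Te := ContinuousLinearEquiv.ofBijective T (LinearMap.ker_eq_bot.2 hinj)
    (LinearMap.range_eq_top.2 hsurj)
  let C := ‖(Te.symm : X →L[ℝ] partialSums e)‖
  refine ⟨max 1 C, le_max_left _ _, fun m n u v hu hv => ?_⟩
  obtain ⟨c, hc⟩ := mem_blockSpan hu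
  obtain ⟨d, hd⟩ := mem_blockSpan hv
  let a : ℕ → ℝ := fun i => if i < m then c i else if i < n then d i else 0
  have hum : u = ∑ i ∈ Finset.range m, a i • e i := by
    rw [hc, ← Finset.range_eq_Ico]
    exact Finset.sum_congr rfl fun i hi => by simp [a, Finset.mem_range.1 hi]
  have hlarge : ∀ k, max m n ≤ k → ∑ i ∈ Finset.range k, a i • e i = u + v := by
    intro k hk
    rw [hum, hd, ← Finset.sum_range_add_sum_Ico _ ((le_max_left m n).trans hk)]
    congr 1
    rw [← Finset.sum_subset (Finset.Ico_subset_Ico_right ((le_max_right m n).trans hk))]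
    · refine Finset.sum_congr rfl fun i hi => ?_
      rw [Finset.mem_Ico] at hi
      simp [a, hi.2, hi.1]
    · intro i hi hi'
      rw [Finset.mem_Ico] at hi hi'
      have h1 : ¬ i < m := by omega
      have h2 : ¬ i < n := by omega
      simp [a, h1, h2]
  have hx : Tendsto (fun k => ∑ i ∈ Finset.range k, a i • e i) atTop (𝓝 (u + v)) :=
    tendsto_const_nhds.congr' (eventually_atTop.2 ⟨max m n, fun k hk => (hlarge k hk).symm⟩)
  obtain ⟨S, hS1, hS2⟩ := hmk a _ hx
  have hS3 : Te.symm (u + v) = S := by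
    rw [ContinuousLinearEquiv.symm_apply_eq]
    exact hS2.symm
  calc ‖u‖ = ‖(S : BoundedContinuousFunction ℕ X) m‖ := by rw [hS1, hum]
    _ ≤ ‖S‖ := BoundedContinuousFunction.norm_coe_le_norm _ m
    _ = ‖(Te.symm : X →L[ℝ] partialSums e) (u + v)‖ := by
        rw [← hS3]; rfl
    _ ≤ C * ‖u + v‖ := ContinuousLinearMap.le_opNorm _ _
    _ ≤ max 1 C * ‖u + v‖ := by gcongr; exact le_max_right _ _

lemma IsSchauderBasis.ne_zero {e : ℕ → X} (he : IsSchauderBasis e) (n : ℕ) : e n ≠ 0 := by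
  classical
  intro h
  have h1 : Tendsto (fun k => ∑ i ∈ Finset.range k, (Pi.single n 1 : ℕ → ℝ) i • e i) atTop
      (𝓝 0) := by
    refine tendsto_const_nhds.congr fun k => (Finset.sum_eq_zero fun i _ => ?_).symm
    by_cases hi : i = n
    · subst hi; simp [h]
    · simp [hi]
  have h2 : Tendsto (fun n => ∑ i ∈ Finset.range n, (0 : ℕ → ℝ) i • e i) atTop (𝓝 0) := by simp
  have h3 := congrFun ((he 0).unique h1 h2) n
  simp at h3

end BasisConstant
end

noncomputable section
open Filter Topology

/-! ### Block sequences -/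

section Blocks

variable {X : Type*} [NormedAddCommGroup X] [NormedSpace ℝ X]

/-- `x` is a sequence of successive blocks of `e` (zero vectors allowed). -/
def Blk (e x : ℕ → X) : Prop :=
  ∃ p : ℕ → ℕ, StrictMono p ∧ ∀ n, x n ∈ blockSpan e (p n) (p (n + 1))

/-- `x` is a normalized sequence of successive blocks of `e`. -/
def NBlk (e x : ℕ → X) : Prop := Blk e x ∧ ∀ n, ‖x n‖ = 1

lemma Blk.comp {e x : ℕ → X} (h : Blk e x) {φ : ℕ → ℕ} (hφ : StrictMono φ) : Blk e (x ∘ φ) := by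
  obtain ⟨p, hp, hx⟩ := h
  exact ⟨p ∘ φ, hp.comp hφ, fun n =>
    blockSpan_mono le_rfl (hp.monotone (hφ (Nat.lt_succ_self n))) (hx (φ n))⟩

lemma NBlk.comp {e x : ℕ → X} (h : NBlk e x) {φ : ℕ → ℕ} (hφ : StrictMono φ) :
    NBlk e (x ∘ φ) := ⟨h.1.comp hφ, fun n => h.2 (φ n)⟩

lemma span_le_blockSpan {e x : ℕ → X} {p : ℕ → ℕ} (hp : StrictMono p)
    (hx : ∀ n, x n ∈ blockSpan e (p n) (p (n + 1))) {J : Finset ℕ} {a b : ℕ}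
    (hJ : ∀ i ∈ J, a ≤ i ∧ i < b) : Submodule.span ℝ (x '' J) ≤ blockSpan e (p a) (p b) := by
  rw [Submodule.span_le]
  rintro _ ⟨i, hi, rfl⟩
  obtain ⟨h1, h2⟩ := hJ i hi
  exact blockSpan_mono (hp.monotone h1) (hp.monotone h2) (hx i)

lemma Blk.of_blocks {e x : ℕ → X} (h : Blk e x) {J : ℕ → Finset ℕ} (hne : ∀ n, (J n).Nonempty)
    (hlt : ∀ n, ∀ i ∈ J n, ∀ j ∈ J (n + 1), i < j) {v : ℕ → X}
    (hv : ∀ n, v n ∈ Submodule.span ℝ (x '' J n)) : Blk e v := by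
  obtain ⟨p, hp, hx⟩ := h
  refine ⟨fun n => p ((J n).min' (hne n)), strictMono_nat_of_lt_succ fun n => hp ?_, fun n => ?_⟩
  · exact hlt n _ (Finset.min'_mem _ _) _ (Finset.min'_mem _ _)
  · exact span_le_blockSpan hp hx
      (fun i hi => ⟨Finset.min'_le _ _ hi, hlt n i hi _ (Finset.min'_mem _ _)⟩) (hv n)

lemma Blk.smul {e x : ℕ → X} (h : Blk e x) (c : ℕ → ℝ) : Blk e (fun n => c n • x n) := by
  obtain ⟨p, hp, hx⟩ := h
  exact ⟨p, hp, fun n => Submodule.smul_mem _ _ (hx n)⟩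

lemma Blk.normalize {e x : ℕ → X} (h : Blk e x) (hx : ∀ n, x n ≠ 0) :
    NBlk e (fun n => ‖x n‖⁻¹ • x n) := by
  refine ⟨h.smul _, fun n => ?_⟩
  rw [norm_smul, norm_inv, norm_norm, inv_mul_cancel₀ (norm_ne_zero_iff.2 (hx n))]

lemma NBlk.isBlockBasis {e x : ℕ → X} (h : NBlk e x) : IsBlockBasis e x := by
  obtain ⟨⟨p, hp, hx⟩, hn⟩ := h
  choose c hc using fun n => mem_blockSpan (hx n)
  -- the index of the block containing `i`
  let ν : ℕ → ℕ := fun i => Nat.findGreatest (fun n => p n ≤ i) i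
  have hν : ∀ n i, p n ≤ i → i < p (n + 1) → ν i = n := by
    intro n i h1 h2
    have h3 : n ≤ i := hp.le_apply.trans h1
    refine (Nat.findGreatest_eq_iff).2 ⟨h3, fun _ => h1, fun k hk _ hki => ?_⟩
    exact absurd (hp.monotone (Nat.succ_le_of_lt hk)) (by simp only [Nat.succ_eq_add_one]; omega)
  refine ⟨fun n => Finset.Ico (p n) (p (n + 1)), fun i => c (ν i) i, fun n => ?_, fun n => ?_,
    fun n => ?_, fun n => ?_⟩
  · exact Finset.nonempty_Ico.2 (hp (Nat.lt_succ_self n))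
  · intro i hi j hj
    rw [Finset.mem_Ico] at hi hj
    omega
  · rw [hc n]
    refine Finset.sum_congr rfl fun i hi => ?_
    rw [Finset.mem_Ico] at hi
    simp only [hν n i hi.1 hi.2]
  · rw [← norm_ne_zero_iff, hn n]; exact one_ne_zero

lemma Blk.split {e x : ℕ → X} {K : ℝ} (hK : BasisConst e K) (h : Blk e x) {I J : Finset ℕ}
    (hIJ : ∀ i ∈ I, ∀ j ∈ J, i < j) {u v : X} (hu : u ∈ Submodule.span ℝ (x '' I))
    (hv : v ∈ Submodule.span ℝ (x '' J)) : ‖u‖ ≤ K * ‖u + v‖ := by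
  obtain ⟨p, hp, hx⟩ := h
  rcases I.eq_empty_or_nonempty with rfl | hI
  · have : u = 0 := by simpa using hu
    rw [this, norm_zero]
    exact mul_nonneg (zero_le_one.trans hK.1) (norm_nonneg _)
  · have h1 := span_le_blockSpan hp hx (J := I) (a := 0) (b := I.max' hI + 1)
      (fun i hi => ⟨Nat.zero_le _, Nat.lt_succ_of_le (Finset.le_max' _ _ hi)⟩) hu
    have h2 := span_le_blockSpan hp hx (J := J) (a := I.max' hI + 1) (b := J.sup id + 1)
      (fun j hj => ⟨hIJ _ (Finset.max'_mem _ _) j hj,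
        Nat.lt_succ_of_le (Finset.le_sup (f := id) hj)⟩) hv
    exact hK.2 _ _ u v (blockSpan_mono (Nat.zero_le _) le_rfl h1) h2

lemma sum_mem_span_image (x : ℕ → X) (a : ℕ → ℝ) (I : Finset ℕ) :
    ∑ i ∈ I, a i • x i ∈ Submodule.span ℝ (x '' I) :=
  Submodule.sum_mem _ fun i hi => Submodule.smul_mem _ _ (Submodule.subset_span ⟨i, hi, rfl⟩)

lemma Blk.sum_le {e x : ℕ → X} {K : ℝ} (hK : BasisConst e K) (h : Blk e x) (a : ℕ → ℝ)
    {G F : Finset ℕ} (hGF : G ⊆ F) (hini : ∀ i ∈ G, ∀ j ∈ F, j ∉ G → i < j) :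
    ‖∑ i ∈ G, a i • x i‖ ≤ K * ‖∑ i ∈ F, a i • x i‖ := by
  rw [← Finset.sum_sdiff hGF, add_comm]
  exact h.split hK (fun i hi j hj => hini i hi j (Finset.mem_sdiff.1 hj).1 (Finset.mem_sdiff.1 hj).2)
    (sum_mem_span_image _ _ _) (sum_mem_span_image _ _ _)

lemma NBlk.coeff_le {e x : ℕ → X} {K : ℝ} (hK : BasisConst e K) (h : NBlk e x) (a : ℕ → ℝ)
    {F : Finset ℕ} {k : ℕ} (hk : k ∈ F) : |a k| ≤ 2 * K * ‖∑ i ∈ F, a i • x i‖ := by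
  have h1 := h.1.sum_le hK a (Finset.filter_subset (· < k) F) (fun i hi j hj hj' => by
    simp only [Finset.mem_filter, not_and] at hi hj'
    have := hj' hj
    omega)
  have h2 := h.1.sum_le hK a (Finset.filter_subset (· ≤ k) F) (fun i hi j hj hj' => by
    simp only [Finset.mem_filter, not_and] at hi hj'
    have := hj' hj
    omega)
  have h3 : F.filter (· ≤ k) = insert k (F.filter (· < k)) := by
    ext i
    simp only [Finset.mem_filter, Finset.mem_insert]
    constructor
    · rintro ⟨hi, hik⟩
      rcases hik.eq_or_lt with h | h
      · exact Or.inl h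
      · exact Or.inr ⟨hi, h⟩
    · rintro (rfl | ⟨hi, hik⟩)
      · exact ⟨hk, le_rfl⟩
      · exact ⟨hi, hik.le⟩
  rw [h3, Finset.sum_insert (by simp)] at h2
  have h4 : ‖a k • x k‖ = |a k| := by rw [norm_smul, h.2, mul_one, Real.norm_eq_abs]
  have h5 := norm_sub_le (a k • x k + ∑ i ∈ F with i < k, a i • x i) (∑ i ∈ F with i < k, a i • x i)
  rw [add_sub_cancel_right, h4] at h5
  linarith

end Blocks
end

noncomputable section
open Filter Topology

/-! ### Spreading models -/

section Spreading

variable {X : Type*} [NormedAddCommGroup X] [NormedSpace ℝ X]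

/-- The norms of `n`-term combinations of `y` with coefficients in `[-1, 1]` depend on the chosen
terms only up to `ε`. -/
def Osc (y : ℕ → X) (n : ℕ) (ε : ℝ) : Prop :=
  ∀ k k' : Fin n → ℕ, StrictMono k → StrictMono k' → ∀ a : Fin n → ℝ, (∀ i, |a i| ≤ 1) →
    |‖∑ i, a i • y (k i)‖ - ‖∑ i, a i • y (k' i)‖| ≤ ε

lemma abs_norm_sum_sub_le {y : ℕ → X} (hy : ∀ n, ‖y n‖ = 1) {n : ℕ} {a b : Fin n → ℝ} {δ : ℝ}
    (h : ∀ i, |a i - b i| ≤ δ) (k : Fin n → ℕ) :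
    |‖∑ i, a i • y (k i)‖ - ‖∑ i, b i • y (k i)‖| ≤ n * δ := by
  refine (abs_norm_sub_norm_le _ _).trans ?_
  rw [← Finset.sum_sub_distrib]
  refine (norm_sum_le _ _).trans ?_
  have : ∀ i ∈ (Finset.univ : Finset (Fin n)), ‖a i • y (k i) - b i • y (k i)‖ ≤ δ := by
    intro i _
    rw [← sub_smul, norm_smul, hy, mul_one]
    exact h i
  simpa using Finset.sum_le_card_nsmul _ _ _ this

/-- Ramsey's theorem, applied to the norms of combinations with coefficients in a finite net,
rounded down. -/
lemma exists_osc {y : ℕ → X} (hy : ∀ n, ‖y n‖ = 1) (n : ℕ) {ε : ℝ} (hε : 0 < ε) :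
    ∃ φ : ℕ → ℕ, StrictMono φ ∧ Osc (y ∘ φ) n ε := by
  obtain ⟨M, hM⟩ := exists_nat_gt ((2 * n + 1) / ε)
  have hM0 : (0 : ℝ) < M := lt_of_le_of_lt (by positivity) hM
  have hM1 : (2 * n + 1) / (M : ℝ) ≤ ε := by
    rw [div_lt_iff₀ hε] at hM
    rw [div_le_iff₀ hM0]
    linarith
  let ι := Fin n → ↥(Finset.Icc (-(M : ℤ)) M)
  let val : ι → (Fin n → ℕ) → ℤ := fun b k =>
    ⌊(M : ℝ) * ‖∑ i, (((b i : ℤ) : ℝ) / M) • y (k i)‖⌋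
  let col : Finset ℕ → ι → ℤ := fun F b =>
    if h : F.card = n then val b (F.orderEmbOfFin h) else 0
  have hT : ∀ F : Finset ℕ, F.card = n →
      col F ∈ Fintype.piFinset (fun _ : ι => Finset.Icc (0 : ℤ) (M * n)) := by
    intro F hF
    rw [Fintype.mem_piFinset]
    intro b
    simp only [col, dif_pos hF, val, Finset.mem_Icc]
    refine ⟨Int.floor_nonneg.2 (by positivity), Int.floor_le_iff.2 ?_⟩
    have : ‖∑ i, (((b i : ℤ) : ℝ) / M) • y (F.orderEmbOfFin hF i)‖ ≤ n := by
      refine (norm_sum_le _ _).trans ?_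
      have h1 : ∀ i ∈ (Finset.univ : Finset (Fin n)),
          ‖(((b i : ℤ) : ℝ) / M) • y (F.orderEmbOfFin hF i)‖ ≤ 1 := by
        intro i _
        rw [norm_smul, hy, mul_one, Real.norm_eq_abs, abs_div, abs_of_pos hM0, div_le_one hM0,
          abs_le]
        have := Finset.mem_Icc.1 (b i).2
        exact ⟨by exact_mod_cast this.1, by exact_mod_cast this.2⟩
      simpa using Finset.sum_le_card_nsmul _ _ _ h1
    push_cast
    nlinarith
  obtain ⟨φ, hφ, c, hc⟩ := ramsey n _ col hT
  refine ⟨φ, hφ, fun k k' hk hk' a ha => ?_⟩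
  have key : ∀ k : Fin n → ℕ, StrictMono k → ∀ b, val b (φ ∘ k) = c b := by
    intro k hk b
    have h1 : (Finset.univ.image k).card = n := by
      rw [Finset.card_image_of_injective _ hk.injective]; simp
    have h2 := congrFun (hc _ h1) b
    have h3 : ((Finset.univ.image k).image φ).card = n := by
      rw [Finset.card_image_of_injective _ hφ.injective, h1]
    have h4 := Finset.orderEmbOfFin_unique h3 (f := φ ∘ k)
      (fun i => Finset.mem_image_of_mem _ (Finset.mem_image_of_mem _ (Finset.mem_univ i)))
      (hφ.comp hk)
    simp only [col, dif_pos h3] at h2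
    rw [← h2, h4]
  let b : ι := fun i => ⟨⌊a i * M⌋, by
    rw [Finset.mem_Icc]
    have := abs_le.1 (ha i)
    constructor
    · rw [Int.le_floor]; push_cast; nlinarith
    · rw [Int.floor_le_iff]; push_cast; nlinarith⟩
  have hb : ∀ i, |a i - ((b i : ℤ) : ℝ) / M| ≤ 1 / M := by
    intro i
    have h1 := Int.floor_le (a i * M)
    have h2 := Int.lt_floor_add_one (a i * M)
    have h3 : a i - ((b i : ℤ) : ℝ) / M = (a i * M - (⌊a i * M⌋ : ℝ)) / M := by
      simp only [b]; field_simp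
    rw [h3, abs_div, abs_of_pos hM0]
    gcongr
    rw [abs_le]; constructor <;> linarith
  have e1 := abs_norm_sum_sub_le hy hb (φ ∘ k)
  have e2 := abs_norm_sum_sub_le hy hb (φ ∘ k')
  have e3 : |‖∑ i, (((b i : ℤ) : ℝ) / M) • y ((φ ∘ k) i)‖ -
      ‖∑ i, (((b i : ℤ) : ℝ) / M) • y ((φ ∘ k') i)‖| ≤ 1 / M := by
    have h := (key k hk b).trans (key k' hk' b).symm
    have h' := Int.abs_sub_lt_one_of_floor_eq_floor h
    rw [← mul_sub, abs_mul, abs_of_pos hM0] at h'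
    rw [le_div_iff₀ hM0]
    linarith
  have e4 : (2 * n + 1) / (M : ℝ) = n * (1 / M) + n * (1 / M) + 1 / M := by ring
  simp only [Function.comp_apply] at e1 e2 e3 ⊢
  rw [abs_le] at *
  constructor <;> linarith [e1.1, e1.2, e2.1, e2.2, e3.1, e3.2]

lemma exists_osc_seq {y : ℕ → X} (hy : ∀ n, ‖y n‖ = 1) : ∃ Φ : ℕ → ℕ, StrictMono Φ ∧
    ∀ n, Osc (fun j => y (Φ (n + j))) n (1 / (n + 1)) := by
  refine diagonal (fun n θ => Osc (fun j => y (θ j)) n (1 / (n + 1))) (fun n θ _ => ?_) ?_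
  · exact exists_osc (y := y ∘ θ) (fun j => hy _) n (by positivity)
  · intro n θ φ _ hφ h k l hk hl
    exact h (φ ∘ k) (φ ∘ l) (hφ.comp hk) (hφ.comp hl)

/-- Brunel–Sucheston: every normalized block sequence has a subsequence with a spreading model. -/
lemma exists_spreadingModel {e y : ℕ → X} {K : ℝ} (hK : BasisConst e K) (hy : NBlk e y) :
    ∃ φ : ℕ → ℕ, StrictMono φ ∧
      ∃ (S : Type) (_ : NormedAddCommGroup S), ∃ (_ : NormedSpace ℝ S) (_ : CompleteSpace S),
        ∃ s : ℕ → S, IsSpreadingModel (y ∘ φ) s := by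
  obtain ⟨Φ, hΦ, hO⟩ := exists_osc_seq hy.2
  refine ⟨Φ, hΦ, ?_⟩
  have hz := hy.comp hΦ
  set z := y ∘ Φ with hzdef
  have hosc : ∀ n (a : Fin n → ℝ), (∀ i, |a i| ≤ 1) → ∀ k k' : Fin n → ℕ, StrictMono k →
      StrictMono k' → (∀ i, n ≤ k i) → (∀ i, n ≤ k' i) →
      |‖∑ i, a i • z (k i)‖ - ‖∑ i, a i • z (k' i)‖| ≤ 1 / (n + 1) := by
    intro n a ha k k' hk hk' hkn hkn'
    have := hO n (fun i => k i - n) (fun i => k' i - n)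
      (fun i j hij => by have := hk hij; have := hkn i; have := hkn j; simp only; omega)
      (fun i j hij => by have := hk' hij; have := hkn' i; have := hkn' j; simp only; omega) a ha
    simp only [Nat.add_sub_cancel' (hkn _), Nat.add_sub_cancel' (hkn' _)] at this
    exact this
  -- `A j` sends the unit vector basis to the sequence `z` shifted by `j`
  let A : ℕ → (ℕ →₀ ℝ) →ₗ[ℝ] X := fun j => Finsupp.linearCombination ℝ (fun i => z (j + i))
  have hA : ∀ j n (a : ℕ → ℝ), A j (∑ i ∈ Finset.range n, Finsupp.single i (a i)) =
      ∑ i ∈ Finset.range n, a i • z (j + i) := by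
    intro j n a; simp [A, map_sum]
  have hrep : ∀ f : ℕ →₀ ℝ, ∃ n₀, ∀ n, n₀ ≤ n →
      f = ∑ i ∈ Finset.range n, Finsupp.single i (f i) := by
    intro f
    refine ⟨f.support.sup id + 1, fun n hn => ?_⟩
    conv_lhs => rw [← Finsupp.sum_single f]
    refine Finset.sum_subset (fun i hi => ?_) (fun i _ hi => ?_)
    · have := Finset.le_sup (f := id) hi
      simp only [id] at this
      rw [Finset.mem_range]; omega
    · rw [Finsupp.notMem_support_iff.1 hi, Finsupp.single_zero]
  have hcau : ∀ f : ℕ →₀ ℝ, ∃ l, Tendsto (fun j => ‖A j f‖) atTop (𝓝 l) := by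
    intro f
    refine cauchySeq_tendsto_of_complete ?_
    obtain ⟨n₀, hn₀⟩ := hrep f
    obtain ⟨C, hC0, hC⟩ : ∃ C : ℝ, 0 < C ∧ ∀ i, |f i| ≤ C := by
      refine ⟨∑ i ∈ f.support, |f i| + 1, by positivity, fun i => ?_⟩
      by_cases hi : i ∈ f.support
      · have := Finset.single_le_sum (f := fun i => |f i|) (fun i _ => abs_nonneg _) hi
        linarith
      · rw [Finsupp.notMem_support_iff.1 hi, abs_zero]; positivity
    rw [Metric.cauchySeq_iff]
    intro ε hε
    obtain ⟨n₁, hn₁⟩ := exists_nat_gt (C / ε)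
    set n := max n₀ n₁
    refine ⟨n, fun j hj j' hj' => ?_⟩
    have h1 := hosc n (fun i => f i / C)
      (fun i => by rw [abs_div, abs_of_pos hC0, div_le_one hC0]; exact hC i)
      (fun i => j + i) (fun i => j' + i)
      (fun i i' h => by simpa using h) (fun i i' h => by simpa using h)
      (fun i => by omega) (fun i => by omega)
    have h2 : ∀ j, ∑ i : Fin n, (f i / C) • z (j + i) = C⁻¹ • A j f := by
      intro j
      conv_rhs => rw [hn₀ n (le_max_left _ _), hA, Finset.sum_range, Finset.smul_sum]
      refine Finset.sum_congr rfl fun i _ => ?_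
      rw [smul_smul, div_eq_inv_mul]
    rw [h2, h2, norm_smul, norm_smul, ← mul_sub, abs_mul, norm_inv, Real.norm_eq_abs,
      abs_of_pos hC0, abs_of_pos (inv_pos.2 hC0), inv_mul_le_iff₀ hC0] at h1
    rw [Real.dist_eq]
    refine h1.trans_lt ?_
    have h3 : (n₁ : ℝ) ≤ n := by exact_mod_cast le_max_right _ _
    rw [div_lt_iff₀ hε] at hn₁
    rw [mul_one_div, div_lt_iff₀ (by positivity)]
    nlinarith
  choose N hN using hcau
  let _ : Norm (ℕ →₀ ℝ) := ⟨N⟩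
  have core : NormedSpace.Core ℝ (ℕ →₀ ℝ) :=
    { norm_nonneg := fun f => ge_of_tendsto' (hN f) fun j => norm_nonneg _
      norm_smul := fun c f => by
        refine tendsto_nhds_unique (hN (c • f)) ?_
        simp only [map_smul, norm_smul]
        exact (hN f).const_mul _
      norm_triangle := fun f g => by
        refine le_of_tendsto_of_tendsto' (hN (f + g)) ((hN f).add (hN g)) fun j => ?_
        rw [map_add]
        exact norm_add_le _ _
      norm_eq_zero_iff := fun f => by
        constructor
        · intro h0
          change N f = 0 at h0
          ext i
          obtain ⟨n₀, hn₀⟩ := hrep f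
          have h1 : ∀ j, |f i| ≤ 2 * K * ‖A j f‖ := by
            intro j
            have := (hz.comp (φ := fun i => j + i) (fun i i' h => by simpa using h)).coeff_le hK
              f (Finset.mem_range.2 (lt_of_lt_of_le (Nat.lt_succ_self i)
                (le_max_right n₀ (i + 1))))
            rw [hn₀ _ (le_max_left n₀ (i + 1)), hA, ← hn₀ _ (le_max_left n₀ (i + 1))]
            exact this
          have h2 := ge_of_tendsto' ((hN f).const_mul (2 * K)) h1
          rw [h0, mul_zero] at h2
          exact abs_nonpos_iff.1 h2
        · rintro rfl
          refine tendsto_nhds_unique (hN 0) ?_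
          simp }
  let i1 : NormedAddCommGroup (ℕ →₀ ℝ) := NormedAddCommGroup.ofCore core
  let i2 : NormedSpace ℝ (ℕ →₀ ℝ) := NormedSpace.ofCore core
  let s : ℕ → UniformSpace.Completion (ℕ →₀ ℝ) := fun i =>
    ((Finsupp.single i 1 : ℕ →₀ ℝ) : UniformSpace.Completion (ℕ →₀ ℝ))
  have hs : ∀ n (a : ℕ → ℝ), ‖∑ i ∈ Finset.range n, a i • s i‖ =
      N (∑ i ∈ Finset.range n, Finsupp.single i (a i)) := by
    intro n a
    have h1 : ∑ i ∈ Finset.range n, a i • s i =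
        ((∑ i ∈ Finset.range n, Finsupp.single i (a i) : ℕ →₀ ℝ) :
          UniformSpace.Completion (ℕ →₀ ℝ)) := by
      have h2 := map_sum (UniformSpace.Completion.toComplₗᵢ (𝕜 := ℝ) (E := ℕ →₀ ℝ))
        (fun i => Finsupp.single i (a i)) (Finset.range n)
      simp only [UniformSpace.Completion.coe_toComplₗᵢ] at h2
      rw [h2]
      refine Finset.sum_congr rfl fun i _ => ?_
      simp only [s]
      rw [← UniformSpace.Completion.coe_smul, Finsupp.smul_single, smul_eq_mul, mul_one]
    rw [h1, UniformSpace.Completion.norm_coe]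
    rfl
  refine ⟨UniformSpace.Completion (ℕ →₀ ℝ), inferInstance, inferInstance, inferInstance, s,
    ⟨K, fun m n hmn a => ?_⟩, fun n => 2 / (n + 1), fun n => by positivity, fun n m h => ?_, ?_, ?_⟩
  · rw [hs, hs]
    refine le_of_tendsto_of_tendsto' (hN _) ((hN _).const_mul K) fun j => ?_
    rw [hA, hA]
    refine (hz.comp (φ := fun i => j + i) (fun i i' h => by simpa using h)).1.sum_le hK a
      (Finset.range_mono hmn) fun i hi i' _ hi' => ?_
    rw [Finset.mem_range] at hi hi'
    omega
  · have : (n : ℝ) ≤ m := by exact_mod_cast h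
    simp only
    gcongr
  · have := (tendsto_one_div_add_atTop_nhds_zero_nat (𝕜 := ℝ)).const_mul 2
    simpa only [mul_zero, mul_one_div] using this
  · intro n a ha k hk hkn
    let a' : ℕ → ℝ := fun i => if h : i < n then a ⟨i, h⟩ else 0
    have ha' : ∀ i : Fin n, a' i = a i := fun i => by simp [a']
    have h1 : ‖∑ i, a i • s i‖ = N (∑ i ∈ Finset.range n, Finsupp.single i (a' i)) := by
      rw [← hs, Finset.sum_range]
      simp only [ha']
    rw [h1]
    have h2 : |‖∑ i, a i • z (k i)‖ - N (∑ i ∈ Finset.range n, Finsupp.single i (a' i))|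
        ≤ 1 / (n + 1) := by
      refine le_of_tendsto ((tendsto_const_nhds.sub (hN _)).abs) ?_
      filter_upwards [eventually_ge_atTop n] with j hj
      rw [hA, Finset.sum_range]
      simp only [ha']
      exact hosc n a ha k (fun i => j + i) hk (fun i i' h => by simpa using h) hkn
        (fun i => by omega)
    refine h2.trans_lt ?_
    exact div_lt_div_of_pos_right (by norm_num) (by positivity)

/-- The norms of sums of two terms of `y` converge to `L` as the terms move to infinity. -/
def PairLim (y : ℕ → X) (L : ℝ) : Prop :=
  ∀ ε > 0, ∃ N, ∀ n m, N ≤ n → n < m → |‖y n + y m‖ - L| < ε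

lemma PairLim.comp {X : Type*} [NormedAddCommGroup X] {y : ℕ → X} {L : ℝ} (h : PairLim y L) {φ : ℕ → ℕ} (hφ : StrictMono φ) :
    PairLim (y ∘ φ) L := by
  intro ε hε
  obtain ⟨N, hN⟩ := h ε hε
  exact ⟨N, fun n m hn hm => hN _ _ (hn.trans hφ.le_apply) (hφ hm)⟩

lemma IsSpreadingModel.pairLim {S : Type*} [NormedAddCommGroup S] [NormedSpace ℝ S]
    {y : ℕ → X} {s : ℕ → S} (h : IsSpreadingModel y s) : PairLim y ‖s 0 + s 1‖ := by
  obtain ⟨-, ε, -, -, hε, H⟩ := h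
  intro δ hδ
  obtain ⟨N, hN⟩ := (hε.eventually (gt_mem_nhds hδ)).exists_forall_of_atTop
  refine ⟨N + 2, fun n m hn hm => ?_⟩
  -- `(N + 2)`-tuples whose coefficients are `1, 1, 0, 0, …`
  have h1 := H (N + 2) (fun i => if (i : ℕ) < 2 then 1 else 0)
    (fun i => by split_ifs <;> simp) (fun i => if (i : ℕ) = 0 then n else m + i - 1)
    (fun i j hij => by
      have : (i : ℕ) < j := hij
      simp only
      split_ifs <;> omega)
    (fun i => by split_ifs <;> omega)
  have h2 : ∀ {V : Type _} [NormedAddCommGroup V] [NormedSpace ℝ V] (f : Fin (N + 2) → V),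
      ∑ i : Fin (N + 2), (if (i : ℕ) < 2 then (1 : ℝ) else 0) • f i = f 0 + f 1 := by
    intro V _ _ f
    rw [Fin.sum_univ_succ, Fin.sum_univ_succ, Finset.sum_eq_zero]
    · simp
    · intro i _
      simp
  have h3 := h2 (fun i : Fin (N + 2) => y (if (i : ℕ) = 0 then n else m + i - 1))
  have h4 : ∑ i : Fin (N + 2), (if (i : ℕ) < 2 then (1 : ℝ) else 0) • s i = s 0 + s 1 := by
    rw [Fin.sum_univ_succ, Fin.sum_univ_succ, Finset.sum_eq_zero]
    · simp
    · intro i _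
      simp
  rw [h3, h4] at h1
  simp at h1
  exact h1.trans (hN _ (by omega))

end Spreading
end

noncomputable section
open Filter Topology

/-! ### Asymptotic block systems -/

/-- An abstract family of blocks with a concatenation `op`, used for successive elements only, an order
relation `lt` and a defect `D`. A successive sequence whose defects tend to `0` (or below) is called admissible;
the law `good` says that the defects of `op (z n) (z m)` also become small along a subsequence of
any admissible `z`. -/
structure BlockSystem (E : Type*) where
  op : E → E → E
  lt : E → E → Prop
  D : E → ℝ
  trans : ∀ a b c, lt a b → lt b c → lt a c
  op_lt : ∀ a b c, lt a c → lt b c → lt (op a b) c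
  lt_op : ∀ a b c, lt c a → lt c b → lt c (op a b)
  ev : ∀ z : ℕ → E, (∀ n m, n < m → lt (z n) (z m)) → ∀ a, ∃ N, ∀ k, N ≤ k → lt a (z k)
  good : ∀ z : ℕ → E, (∀ n m, n < m → lt (z n) (z m)) →
    (∀ ε > 0, ∃ N, ∀ n, N ≤ n → D (z n) ≤ ε) →
    ∃ χ : ℕ → ℕ, StrictMono χ ∧
      ∀ ε > 0, ∃ N, ∀ n m, N ≤ n → n < m → D (op (z (χ n)) (z (χ m))) ≤ ε

namespace BlockSystem

variable {E : Type*} (B : BlockSystem E)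

/-- Successive sequences whose defects tend to `0` or below. -/
def Adm (z : ℕ → E) : Prop :=
  (∀ n m, n < m → B.lt (z n) (z m)) ∧ ∀ ε > 0, ∃ N, ∀ n, N ≤ n → B.D (z n) ≤ ε

/-- The elements generated by `z` under concatenation of successive elements. -/
inductive Gen (z : ℕ → E) : E → Prop
  | base (n : ℕ) : Gen z (z n)
  | op {a b : E} : Gen z a → Gen z b → B.lt a b → Gen z (B.op a b)

/-- Every admissible sequence generates an admissible sequence inside `T`. -/
def Dense (T : E → Prop) : Prop :=
  ∀ z, B.Adm z → ∃ w, B.Adm w ∧ ∀ n, B.Gen z (w n) ∧ T (w n)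

/-- `T` is stable under concatenation of successive elements. -/
def Closed (T : E → Prop) : Prop := ∀ a b, T a → T b → B.lt a b → T (B.op a b)

variable {B}

lemma Gen.mem {z : ℕ → E} {T : E → Prop} (hT : B.Closed T) (hz : ∀ n, T (z n)) {u : E}
    (hu : B.Gen z u) : T u := by
  induction hu with
  | base n => exact hz n
  | op _ _ hlt iha ihb => exact hT _ _ iha ihb hlt

lemma Gen.trans {z w : ℕ → E} (hw : ∀ n, B.Gen z (w n)) {u : E} (hu : B.Gen w u) : B.Gen z u :=
  Gen.mem (T := B.Gen z) (fun _ _ ha hb h => Gen.op ha hb h) hw hu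

lemma Dense.inter {T T' : E → Prop} (h : B.Dense T) (hT : B.Closed T) (h' : B.Dense T') :
    B.Dense fun u => T u ∧ T' u := by
  intro z hz
  obtain ⟨w, hw, hzw⟩ := h z hz
  obtain ⟨w', hw', hww'⟩ := h' w hw
  exact ⟨w', hw', fun n => ⟨Gen.trans (fun k => (hzw k).1) (hww' n).1,
    (hww' n).1.mem hT fun k => (hzw k).2, (hww' n).2⟩⟩

lemma Dense.mono {T T' : E → Prop} (h : B.Dense T) (hTT' : ∀ u, T u → T' u) : B.Dense T' := by
  intro z hz
  obtain ⟨w, hw, hzw⟩ := h z hz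
  exact ⟨w, hw, fun n => ⟨(hzw n).1, hTT' _ (hzw n).2⟩⟩

lemma dense_finset {ι : Type*} (s : Finset ι) {T : ι → E → Prop} (hT : ∀ i ∈ s, B.Dense (T i))
    (hc : ∀ i ∈ s, B.Closed (T i)) : B.Dense fun u => ∀ i ∈ s, T i u := by
  classical
  induction s using Finset.induction_on with
  | empty => exact fun z hz => ⟨z, hz, fun n => ⟨Gen.base n, by simp⟩⟩
  | insert i s _ ih =>
    refine ((hT i (Finset.mem_insert_self _ _)).inter (hc i (Finset.mem_insert_self _ _))
      (ih (fun j hj => hT j (Finset.mem_insert_of_mem hj))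
        fun j hj => hc j (Finset.mem_insert_of_mem hj))).mono ?_
    rintro u ⟨h1, h2⟩ j hj
    rcases Finset.mem_insert.1 hj with rfl | hj
    · exact h1
    · exact h2 j hj

lemma adm_of_succ {z : ℕ → E} (h : ∀ n, B.lt (z n) (z (n + 1)))
    (hD : ∀ ε > 0, ∃ N, ∀ n, N ≤ n → B.D (z n) ≤ ε) : B.Adm z := by
  refine ⟨fun n m hnm => ?_, hD⟩
  induction m, hnm using Nat.le_induction with
  | base => exact h n
  | succ m _ ih => exact B.trans _ _ _ ih (h m)

/-- Diagonalization: given countably many dense closed properties `T i`, an admissible sequence of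
pairs `op (a n) (b n)` can be found for which `b n` has as many of the properties as prescribed by
a function of `a n`. -/
lemma exists_pairs {T : ℕ → E → Prop} (hd : ∀ i, B.Dense (T i)) (hc : ∀ i, B.Closed (T i))
    (g : E → ℕ) {z : ℕ → E} (hz : B.Adm z) :
    ∃ a b : ℕ → E, (∀ n, B.lt (a n) (b n)) ∧ B.Adm (fun n => B.op (a n) (b n)) ∧
      ∀ n, B.Gen z (a n) ∧ B.Gen z (b n) ∧ T 0 (a n) ∧ ∀ i ≤ g (a n), T i (b n) := by
  have hd' : ∀ i (w : {z // B.Adm z}), ∃ w' : {z // B.Adm z},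
      ∀ n, B.Gen w.1 (w'.1 n) ∧ T i (w'.1 n) := by
    intro i w
    obtain ⟨w', h1, h2⟩ := hd i w.1 w.2
    exact ⟨⟨w', h1⟩, h2⟩
  choose nx hnx using hd'
  let W : ℕ → {z // B.Adm z} := fun n => Nat.rec (nx 0 ⟨z, hz⟩) (fun i w => nx (i + 1) w) n
  have hW1 : ∀ i n, B.Gen z ((W i).1 n) := by
    intro i
    induction i with
    | zero => exact fun n => (hnx 0 ⟨z, hz⟩ n).1
    | succ i ih => exact fun n => Gen.trans ih (hnx (i + 1) (W i) n).1
  have hW2 : ∀ i, ∀ j ≤ i, ∀ n, T j ((W i).1 n) := by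
    intro i
    induction i with
    | zero =>
      intro j hj n
      obtain rfl : j = 0 := by omega
      exact (hnx 0 ⟨z, hz⟩ n).2
    | succ i ih =>
      intro j hj n
      rcases hj.eq_or_lt with rfl | hj
      · exact (hnx (i + 1) (W i) n).2
      · exact (hnx (i + 1) (W i) n).1.mem (hc j) (ih j (by omega))
  have hnext : ∀ (n : ℕ) (a : E), ∃ k, B.lt a ((W n).1 k) ∧ B.D ((W n).1 k) ≤ 1 / ((n : ℝ) + 1) := by
    intro n a
    obtain ⟨N, hN⟩ := B.ev _ (W n).2.1 a
    obtain ⟨N', hN'⟩ := (W n).2.2 (1 / ((n : ℝ) + 1)) (by positivity)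
    exact ⟨max N N', hN _ (le_max_left _ _), hN' _ (le_max_right _ _)⟩
  choose f hf using hnext
  let d : ℕ → E := fun n => Nat.rec ((W 0).1 (f 0 (z 0))) (fun n a => (W (n + 1)).1 (f (n + 1) a)) n
  have hdW : ∀ n, ∃ k, d n = (W n).1 k := by
    intro n
    cases n with
    | zero => exact ⟨_, rfl⟩
    | succ n => exact ⟨_, rfl⟩
  have hdD : ∀ n, B.D (d n) ≤ 1 / ((n : ℝ) + 1) := by
    intro n
    cases n with
    | zero => exact (hf 0 (z 0)).2
    | succ n => exact (hf (n + 1) (d n)).2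
  have hdA : B.Adm d := by
    refine adm_of_succ (fun n => (hf (n + 1) (d n)).1) fun ε hε => ?_
    obtain ⟨N, hN⟩ := exists_nat_one_div_lt hε
    refine ⟨N, fun n hn => (hdD n).trans (le_trans ?_ hN.le)⟩
    have : (N : ℝ) ≤ n := by exact_mod_cast hn
    gcongr
  have hdG : ∀ n, B.Gen z (d n) := fun n => by
    obtain ⟨k, hk⟩ := hdW n
    rw [hk]; exact hW1 n k
  have hdT : ∀ n, ∀ j ≤ n, T j (d n) := fun n j hj => by
    obtain ⟨k, hk⟩ := hdW n
    rw [hk]; exact hW2 n j hj k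
  obtain ⟨χ, hχ, hgood⟩ := B.good d hdA.1 hdA.2
  let q : ℕ → ℕ := fun p => max (p + 1) (g (d (χ p)))
  have hq : ∀ p, p < q p := fun p => lt_of_lt_of_le (Nat.lt_succ_self p) (le_max_left _ _)
  let p : ℕ → ℕ := fun n => Nat.rec 0 (fun _ p => q p + 1) n
  have hp : ∀ n, p (n + 1) = q (p n) + 1 := fun n => rfl
  have hpn : ∀ n, n ≤ p n := by
    intro n
    induction n with
    | zero => exact Nat.zero_le _
    | succ n ih => rw [hp]; have := hq (p n); omega
  refine ⟨fun n => d (χ (p n)), fun n => d (χ (q (p n))), fun n => hdA.1 _ _ (hχ (hq _)),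
    adm_of_succ (fun n => ?_) (fun ε hε => ?_), fun n => ⟨hdG _, hdG _, hdT _ _ (Nat.zero_le _),
      fun i hi => hdT _ _ ?_⟩⟩
  · have h1 := hq (p n)
    have h2 := hq (p (n + 1))
    have h3 := hp n
    exact B.op_lt _ _ _
      (B.lt_op _ _ _ (hdA.1 _ _ (hχ (by omega))) (hdA.1 _ _ (hχ (by omega))))
      (B.lt_op _ _ _ (hdA.1 _ _ (hχ (by omega))) (hdA.1 _ _ (hχ (by omega))))
  · obtain ⟨N, hN⟩ := hgood ε hε
    exact ⟨N, fun n hn => hN _ _ (hn.trans (hpn n)) (hq _)⟩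
  · exact hi.trans ((le_max_right _ _).trans hχ.le_apply)

end BlockSystem
end

noncomputable section
open Filter Topology

/-! ### The dichotomy -/

section Dichotomy

variable {X : Type*} [NormedAddCommGroup X] [NormedSpace ℝ X]

/-- Every normalized block sequence has a subsequence whose pair sums have a limiting norm which is
at most `1` or equal to `2`. -/
def Extremal (e : ℕ → X) : Prop :=
  ∀ y, NBlk e y → ∃ (φ : ℕ → ℕ) (L : ℝ), StrictMono φ ∧ PairLim (y ∘ φ) L ∧ (L ≤ 1 ∨ L = 2)

/-- Some subsequence of `y` has pair sums with norms tending to `2`. -/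
def HasTwo (y : ℕ → X) : Prop := ∃ φ : ℕ → ℕ, StrictMono φ ∧ PairLim (y ∘ φ) 2

lemma Extremal.near {e y z : ℕ → X} (H : Extremal e) (hz : NBlk e z)
    (hyz : ∀ n, ‖y n - z n‖ ≤ 1 / 8) (h2 : HasTwo y) : HasTwo z := by
  obtain ⟨φ, hφ, h2⟩ := h2
  obtain ⟨ψ, L, hψ, hL, hL'⟩ := H _ (hz.comp hφ)
  rcases hL' with hL1 | rfl
  · exfalso
    obtain ⟨N, hN⟩ := h2.comp hψ (1 / 4) (by norm_num)
    obtain ⟨N', hN'⟩ := hL (1 / 4) (by norm_num)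
    have e1 := hN _ _ (le_max_left N N') (Nat.lt_succ_self _)
    have e2 := hN' _ _ (le_max_right N N') (Nat.lt_succ_self _)
    set n := max N N'
    simp only [Function.comp_apply] at e1 e2
    have e3 := hyz (φ (ψ n))
    have e4 := hyz (φ (ψ (n + 1)))
    have e5 : ‖y (φ (ψ n)) + y (φ (ψ (n + 1)))‖ ≤ ‖z (φ (ψ n)) + z (φ (ψ (n + 1)))‖ +
        (‖y (φ (ψ n)) - z (φ (ψ n))‖ + ‖y (φ (ψ (n + 1))) - z (φ (ψ (n + 1)))‖) := by
      calc _ = ‖(z (φ (ψ n)) + z (φ (ψ (n + 1)))) + ((y (φ (ψ n)) - z (φ (ψ n))) +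
            (y (φ (ψ (n + 1))) - z (φ (ψ (n + 1)))))‖ := by congr 1; abel
        _ ≤ _ := (norm_add_le _ _).trans (by gcongr; exact norm_add_le _ _)
    rw [abs_lt] at e1 e2
    linarith [e1.1, e2.2]
  · exact ⟨φ ∘ ψ, hφ.comp hψ, hL⟩

lemma norm_normalize_sub_le {u v : X} (hu : u ≠ 0) (hv : v ≠ 0) :
    ‖‖u‖⁻¹ • u - ‖v‖⁻¹ • v‖ ≤ 2 * ‖u - v‖ / ‖u‖ := by
  have h1 : ‖u‖⁻¹ • u - ‖v‖⁻¹ • v = ‖u‖⁻¹ • (u - v) + (‖u‖⁻¹ * (‖v‖ - ‖u‖)) • (‖v‖⁻¹ • v) := by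
    have hv' : ‖v‖ ≠ 0 := norm_ne_zero_iff.2 hv
    have hu' : ‖u‖ ≠ 0 := norm_ne_zero_iff.2 hu
    rw [smul_sub, smul_smul, sub_add, sub_right_inj, ← sub_smul]
    congr 1
    field_simp
    ring
  have hu' : 0 < ‖u‖ := norm_pos_iff.2 hu
  have h2 : ‖‖v‖⁻¹ • v‖ = 1 := by
    rw [norm_smul, norm_inv, norm_norm, inv_mul_cancel₀ (norm_ne_zero_iff.2 hv)]
  have h3 : |‖v‖ - ‖u‖| ≤ ‖u - v‖ := by rw [abs_sub_comm]; exact abs_norm_sub_norm_le _ _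
  rw [h1]
  refine (norm_add_le _ _).trans ?_
  rw [norm_smul, norm_smul, h2, mul_one, norm_mul, norm_inv, norm_norm, Real.norm_eq_abs,
    div_eq_inv_mul]
  have := mul_le_mul_of_nonneg_left h3 (inv_nonneg.2 hu'.le)
  linarith

lemma exists_interleave {e y z : ℕ → X} (hy : Blk e y) (hz : Blk e z) :
    ∃ a b P Q : ℕ → ℕ, StrictMono a ∧ StrictMono b ∧ StrictMono P ∧
      ∀ n, P n ≤ Q n ∧ Q n ≤ P (n + 1) ∧ y (a n) ∈ blockSpan e (P n) (Q n) ∧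
        z (b n) ∈ blockSpan e (Q n) (P (n + 1)) := by
  obtain ⟨p, hp, hpy⟩ := hy
  obtain ⟨r, hr, hrz⟩ := hz
  let a : ℕ → ℕ := fun n => Nat.rec 0 (fun _ a => r (p (a + 1) + 1) + a + 1) n
  have ha : ∀ n, a (n + 1) = r (p (a n + 1) + 1) + a n + 1 := fun _ => rfl
  have ham : StrictMono a := strictMono_nat_of_lt_succ fun n => by rw [ha]; omega
  have h1 : ∀ n, r (p (a n + 1) + 1) ≤ p (a (n + 1)) := fun n => by
    refine le_trans ?_ hp.le_apply
    rw [ha]; omega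
  refine ⟨a, fun n => p (a n + 1), fun n => p (a n), fun n => p (a n + 1), ham,
    fun n m h => hp (by have := ham h; omega), hp.comp ham, fun n => ⟨hp.monotone (by omega),
      hp.monotone ?_, hpy _, blockSpan_mono hr.le_apply (h1 n) (hrz _)⟩⟩
  have := ham (Nat.lt_succ_self n)
  simp only [Nat.succ_eq_add_one] at this
  omega

/-- Having pair sums of norm about `2` passes from one normalized block sequence to any other:
move along the segments joining interleaved terms in small steps. -/
lemma Extremal.transfer {e y z : ℕ → X} {K : ℝ} (hK : BasisConst e K) (H : Extremal e)
    (hy : NBlk e y) (hz : NBlk e z) (h2 : HasTwo y) : HasTwo z := by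
  obtain ⟨φ, hφ, h2⟩ := h2
  obtain ⟨a, b, P, Q, ha, hb, hP, hab⟩ := exists_interleave (hy.comp hφ).1 hz.1
  have hK1 := hK.1
  let u : ℝ → ℕ → X := fun t n => (1 - t) • y (φ (a n)) + t • z (b n)
  have hu1 : ∀ t, Blk e (u t) := fun t => ⟨P, hP, fun n => Submodule.add_mem _
    (Submodule.smul_mem _ _ (blockSpan_mono le_rfl (hab n).2.1 (hab n).2.2.1))
    (Submodule.smul_mem _ _ (blockSpan_mono (hab n).1 le_rfl (hab n).2.2.2))⟩
  have hu2 : ∀ t n, 0 ≤ t → t ≤ 1 → 1 ≤ (1 + 2 * K) * ‖u t n‖ := by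
    intro t n h0 h1
    have e1 := hK.2 _ _ _ _
      (Submodule.smul_mem _ (1 - t) (blockSpan_mono (Nat.zero_le _) le_rfl (hab n).2.2.1))
      (Submodule.smul_mem _ t (hab n).2.2.2)
    have e2 : ‖t • z (b n)‖ ≤ ‖u t n‖ + ‖(1 - t) • y (φ (a n))‖ := by
      have := norm_sub_le (u t n) ((1 - t) • y (φ (a n)))
      simpa only [u, add_sub_cancel_left] using this
    have e3 : ‖(1 - t) • y (φ (a n))‖ = 1 - t := by
      rw [norm_smul, hy.2, mul_one, Real.norm_eq_abs, abs_of_nonneg (by linarith)]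
    have e4 : ‖t • z (b n)‖ = t := by
      rw [norm_smul, hz.2, mul_one, Real.norm_eq_abs, abs_of_nonneg h0]
    have e5 : ‖(1 - t) • y (φ (a n))‖ ≤ K * ‖u t n‖ := e1
    linarith
  have hu3 : ∀ t n, 0 ≤ t → t ≤ 1 → u t n ≠ 0 := by
    intro t n h0 h1 h
    have := hu2 t n h0 h1
    rw [h, norm_zero, mul_zero] at this
    linarith
  let c : ℝ → ℕ → X := fun t n => ‖u t n‖⁻¹ • u t n
  have hc : ∀ t, 0 ≤ t → t ≤ 1 → NBlk e (c t) := fun t h0 h1 =>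
    (hu1 t).normalize fun n => hu3 t n h0 h1
  obtain ⟨M, hM⟩ := exists_nat_ge (32 * (1 + 2 * K))
  have hM0 : (0 : ℝ) < M := lt_of_lt_of_le (by positivity) hM
  have key : ∀ i : ℕ, i ≤ M → HasTwo (c (i / M)) := by
    intro i
    induction i with
    | zero =>
      intro _
      have : c ((0 : ℕ) / M) = (y ∘ φ) ∘ a := by
        funext n
        simp [c, u, hy.2]
      rw [this]
      exact ⟨id, strictMono_id, h2.comp ha⟩
    | succ i ih =>
      intro hi
      have hi' : (i : ℝ) + 1 ≤ M := by exact_mod_cast hi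
      have b0 : (0 : ℝ) ≤ i / M := by positivity
      have b1 : (i : ℝ) / M ≤ 1 := by rw [div_le_one hM0]; linarith
      have b2 : (0 : ℝ) ≤ (i + 1 : ℕ) / M := by positivity
      have b3 : ((i + 1 : ℕ) : ℝ) / M ≤ 1 := by rw [div_le_one hM0]; push_cast; linarith
      refine H.near (hc _ b2 b3) (fun n => ?_) (ih (by omega))
      refine (norm_normalize_sub_le (hu3 _ n b0 b1) (hu3 _ n b2 b3)).trans ?_
      have e1 : u (i / M) n - u ((i + 1 : ℕ) / M) n =
          (1 / M : ℝ) • y (φ (a n)) - (1 / M : ℝ) • z (b n) := by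
        simp only [u]
        push_cast
        rw [add_div, add_sub_add_comm, ← sub_smul, ← sub_smul, sub_eq_add_neg _ ((1 / M : ℝ) • _),
          ← neg_smul]
        congr 2 <;> ring
      have e2 : ‖u (i / M) n - u ((i + 1 : ℕ) / M) n‖ ≤ 2 / M := by
        rw [e1]
        refine (norm_sub_le _ _).trans ?_
        rw [norm_smul, norm_smul, hy.2, hz.2, Real.norm_eq_abs, abs_of_nonneg (by positivity)]
        exact le_of_eq (by ring)
      have e3 := hu2 _ n b0 b1
      have e4 : 0 < ‖u (i / M) n‖ := norm_pos_iff.2 (hu3 _ n b0 b1)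
      rw [div_le_iff₀ e4]
      rw [le_div_iff₀ hM0] at e2
      nlinarith
  have h1 := key M le_rfl
  have h3 : c ((M : ℕ) / M) = z ∘ b := by
    funext n
    simp [c, u, hz.2, div_self hM0.ne']
  rw [h3] at h1
  obtain ⟨ψ, hψ, h⟩ := h1
  exact ⟨b ∘ ψ, hb.comp hψ, h⟩

lemma Extremal.dichotomy {e : ℕ → X} {K : ℝ} (hK : BasisConst e K) (H : Extremal e) :
    (∀ y, NBlk e y → HasTwo y) ∨
      ∀ y, NBlk e y → ∃ (φ : ℕ → ℕ) (L : ℝ), StrictMono φ ∧ PairLim (y ∘ φ) L ∧ L ≤ 1 := by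
  by_cases h : ∃ y, NBlk e y ∧ HasTwo y
  · obtain ⟨y, hy, h2⟩ := h
    exact Or.inl fun z hz => H.transfer hK hy hz h2
  · refine Or.inr fun y hy => ?_
    obtain ⟨φ, L, hφ, hL, h1 | rfl⟩ := H y hy
    · exact ⟨φ, L, hφ, hL, h1⟩
    · exact absurd ⟨y, hy, φ, hφ, hL⟩ h

end Dichotomy
end

noncomputable section
open Filter Topology

/-! ### Growing chains of finite sets -/

/-- `G` is an initial segment of `F`. -/
def Init (G F : Finset ℕ) : Prop := G ⊆ F ∧ ∀ a ∈ G, ∀ b ∈ F, b ∉ G → a < b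

/-- `F` lies entirely to the left of `G`. -/
def Bef (F G : Finset ℕ) : Prop := ∀ i ∈ F, ∀ j ∈ G, i < j

lemma Bef.disjoint {F G : Finset ℕ} (h : Bef F G) : Disjoint F G :=
  Finset.disjoint_left.2 fun i hi hj => lt_irrefl _ (h i hi i hj)

lemma Bef.union_left {F G H : Finset ℕ} (h : Bef F H) (h' : Bef G H) : Bef (F ∪ G) H := by
  intro i hi j hj
  rcases Finset.mem_union.1 hi with hi | hi
  · exact h i hi j hj
  · exact h' i hi j hj

lemma Bef.union_right {F G H : Finset ℕ} (h : Bef F G) (h' : Bef F H) : Bef F (G ∪ H) := by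
  intro i hi j hj
  rcases Finset.mem_union.1 hj with hj | hj
  · exact h i hi j hj
  · exact h' i hi j hj

lemma Bef.mono_left {F F' G : Finset ℕ} (h : Bef F G) (hF : F' ⊆ F) : Bef F' G :=
  fun i hi j hj => h i (hF hi) j hj

lemma Bef.init_union {F G : Finset ℕ} (h : Bef F G) : Init F (F ∪ G) :=
  ⟨Finset.subset_union_left, fun a ha b hb hb' =>
    h a ha b ((Finset.mem_union.1 hb).resolve_left hb')⟩

lemma Init.trans {F G H : Finset ℕ} (h : Init F G) (h' : Init G H) : Init F H :=
  ⟨h.1.trans h'.1, fun a ha b hb hb' => by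
    by_cases hbG : b ∈ G
    · exact h.2 a ha b hbG hb'
    · exact h'.2 a (h.1 ha) b hb hbG⟩

lemma exists_bef {z : ℕ → Finset ℕ} (hne : ∀ n, (z n).Nonempty)
    (hz : ∀ n m, n < m → Bef (z n) (z m)) (F : Finset ℕ) : ∃ N, ∀ k, N ≤ k → Bef F (z k) := by
  have h1 : ∀ k, ∀ j ∈ z k, k ≤ j := by
    intro k
    induction k with
    | zero => exact fun _ _ => Nat.zero_le _
    | succ k ih =>
      intro j hj
      obtain ⟨i, hi⟩ := hne k
      exact (ih i hi).trans_lt (hz k (k + 1) (Nat.lt_succ_self k) i hi j hj)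
  refine ⟨F.sup id + 1, fun k hk i hi j hj => ?_⟩
  have h2 := Finset.le_sup (f := id) hi
  have h3 := h1 k j hj
  simp only [id] at h2
  omega

lemma BlockSystem.dense_bef {E : Type*} (B : BlockSystem E) (S : E → Finset ℕ)
    (hne : ∀ u, (S u).Nonempty) (hlt : ∀ a b, B.lt a b → Bef (S a) (S b)) (F : Finset ℕ) :
    B.Dense fun u => Bef F (S u) := by
  intro z hz
  obtain ⟨N, hN⟩ := exists_bef (fun n => hne (z n)) (fun n m h => hlt _ _ (hz.1 n m h)) F
  refine ⟨fun n => z (n + N), ⟨fun n m h => hz.1 _ _ (by omega), fun ε hε => ?_⟩,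
    fun n => ⟨.base _, hN _ (by omega)⟩⟩
  obtain ⟨N', hN'⟩ := hz.2 ε hε
  exact ⟨N', fun n hn => hN' _ (by omega)⟩

/-- If the finite sets satisfying `P` can always be enlarged, some infinite set has all its initial
segments in a family `Q ⊇ P` closed under initial segments. -/
lemma exists_infinite_of_chain {P Q : Finset ℕ → Prop} (h0 : P ∅)
    (hstep : ∀ F, P F → ∃ G, F ⊂ G ∧ P G) (hPQ : ∀ F, P F → Q F)
    (hQ : ∀ G F, Init G F → Q F → Q G) :
    ∃ ψ : ℕ → ℕ, StrictMono ψ ∧ ∀ n, Q ((Finset.range n).image ψ) := by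
  have hstep' : ∀ F : {F // P F}, ∃ G : {F // P F}, F.1 ⊂ G.1 := fun F => by
    obtain ⟨G, h1, h2⟩ := hstep F.1 F.2
    exact ⟨⟨G, h2⟩, h1⟩
  choose nx hnx using hstep'
  let C : ℕ → {F // P F} := fun n => Nat.rec ⟨∅, h0⟩ (fun _ F => nx F) n
  have hC : StrictMono fun n => (C n).1 := strictMono_nat_of_lt_succ fun n => hnx (C n)
  let M : Set ℕ := ⋃ n, ((C n).1 : Set ℕ)
  have hM : M.Infinite := by
    intro hfin
    have h1 : ∀ n, (C n).1 ⊆ hfin.toFinset := fun n i hi =>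
      hfin.mem_toFinset.2 (Set.mem_iUnion.2 ⟨n, hi⟩)
    have h2 : ∀ n, n ≤ (C n).1.card := by
      intro n
      induction n with
      | zero => exact Nat.zero_le _
      | succ n ih => exact ih.trans_lt (Finset.card_lt_card (hC (Nat.lt_succ_self n)))
    have h3 := (h2 (hfin.toFinset.card + 1)).trans (Finset.card_le_card (h1 (hfin.toFinset.card + 1)))
    omega
  have hψ : StrictMono (Nat.nth (· ∈ M)) := Nat.nth_strictMono hM
  have hmem : ∀ i, Nat.nth (· ∈ M) i ∈ M := Nat.nth_mem_of_infinite hM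
  refine ⟨Nat.nth (· ∈ M), hψ, fun n => ?_⟩
  have h1 : ∃ m, (Finset.range n).image (Nat.nth (· ∈ M)) ⊆ (C m).1 := by
    choose r hr using fun i => Set.mem_iUnion.1 (hmem i)
    refine ⟨(Finset.range n).sup r, fun b hb => ?_⟩
    obtain ⟨i, hi, rfl⟩ := Finset.mem_image.1 hb
    exact hC.monotone (Finset.le_sup hi) (hr i)
  obtain ⟨m, hm⟩ := h1
  refine hQ _ _ ⟨hm, fun a ha b hb hb' => ?_⟩ (hPQ _ (C m).2)
  obtain ⟨i, hi, rfl⟩ := Finset.mem_image.1 ha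
  have hbM : b ∈ M := Set.mem_iUnion.2 ⟨m, hb⟩
  obtain ⟨j, rfl⟩ : b ∈ Set.range (Nat.nth (· ∈ M)) := by
    rw [Nat.range_nth_of_infinite (p := (· ∈ M)) hM]; exact hbM
  refine hψ ?_
  by_contra hji
  exact hb' (Finset.mem_image.2 ⟨j, Finset.mem_range.2
    (lt_of_le_of_lt (not_lt.1 hji) (Finset.mem_range.1 hi)), rfl⟩)

/-! ### Small pair sums give a copy of the space of null sequences -/

section CZero

variable {X : Type*} [NormedAddCommGroup X] [NormedSpace ℝ X]

/-- Every normalized block sequence has a subsequence whose pair sums have norms tending to a limit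
at most `1`. -/
def SmallPairs (e : ℕ → X) : Prop :=
  ∀ y, NBlk e y → ∃ (φ : ℕ → ℕ) (L : ℝ), StrictMono φ ∧ PairLim (y ∘ φ) L ∧ L ≤ 1

lemma sum_mem_span_image' (x : ℕ → X) (I : Finset ℕ) :
    ∑ i ∈ I, x i ∈ Submodule.span ℝ (x '' I) := by
  simpa using sum_mem_span_image x (fun _ => 1) I

/-- Scaling two vectors of norms at most `ρ` down to the unit sphere does not hurt the bound on the
norm of their sum. -/
lemma norm_add_le_of_normalize {u v : X} {ρ δ : ℝ} (hu : ‖u‖ ≤ ρ) (hv : ‖v‖ ≤ ρ) (hu0 : u ≠ 0)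
    (hv0 : v ≠ 0) (hδ : 0 ≤ δ) (h : ‖‖u‖⁻¹ • u + ‖v‖⁻¹ • v‖ ≤ 1 + δ) :
    ‖u + v‖ ≤ ρ * (1 + δ) := by
  have main : ∀ {u v : X}, ‖u‖ ≤ ‖v‖ → ‖v‖ ≤ ρ → u ≠ 0 → v ≠ 0 →
      ‖‖u‖⁻¹ • u + ‖v‖⁻¹ • v‖ ≤ 1 + δ → ‖u + v‖ ≤ ρ * (1 + δ) := by
    intro u v huv hv hu0 hv0 h
    have hu' : ‖u‖ ≠ 0 := norm_ne_zero_iff.2 hu0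
    have hv' : ‖v‖ ≠ 0 := norm_ne_zero_iff.2 hv0
    have e1 : u + v = ‖u‖ • (‖u‖⁻¹ • u + ‖v‖⁻¹ • v) + (‖v‖ - ‖u‖) • (‖v‖⁻¹ • v) := by
      rw [smul_add, smul_smul, mul_inv_cancel₀ hu', one_smul, add_assoc, ← add_smul,
        add_sub_cancel, smul_smul, mul_inv_cancel₀ hv', one_smul]
    have e2 : ‖‖v‖⁻¹ • v‖ = 1 := by
      rw [norm_smul, norm_inv, norm_norm, inv_mul_cancel₀ hv']
    rw [e1]
    refine (norm_add_le _ _).trans ?_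
    rw [norm_smul, norm_smul, e2, norm_norm, Real.norm_eq_abs, abs_of_nonneg (sub_nonneg.2 huv)]
    have e3 := mul_le_mul_of_nonneg_left h (norm_nonneg u)
    nlinarith [norm_nonneg u, norm_nonneg v]
  rcases le_total ‖u‖ ‖v‖ with huv | huv
  · exact main huv hv hu0 hv0 h
  · rw [add_comm] at h ⊢
    exact main huv hu hv0 hu0 h

/-- Nonempty finite sets `F` under union, with defect `‖∑ i ∈ F, x i‖ - 1`. -/
def sumSystem {e x : ℕ → X} {K : ℝ} (hK : BasisConst e K) (H : SmallPairs e) (hx : NBlk e x) :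
    BlockSystem {F : Finset ℕ // F.Nonempty} where
  op a b := ⟨a.1 ∪ b.1, a.2.mono Finset.subset_union_left⟩
  lt a b := Bef a.1 b.1
  D a := ‖∑ i ∈ a.1, x i‖ - 1
  trans a b c hab hbc := fun i hi j hj => by
    obtain ⟨k, hk⟩ := b.2
    exact (hab i hi k hk).trans (hbc k hk j hj)
  op_lt _ _ _ h h' := h.union_left h'
  lt_op _ _ _ h h' := h.union_right h'
  ev z hz a := exists_bef (fun n => (z n).2) hz a.1
  good z hz hD := by
    let v : ℕ → X := fun n => ∑ i ∈ (z n).1, x i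
    have hv0 : ∀ n, v n ≠ 0 := by
      intro n h0
      obtain ⟨k, hk⟩ := (z n).2
      have h1 := hx.coeff_le hK (fun _ => 1) hk
      simp only [one_smul, abs_one] at h1
      change 1 ≤ 2 * K * ‖v n‖ at h1
      rw [h0, norm_zero, mul_zero] at h1
      linarith
    have hv : Blk e v := hx.1.of_blocks (J := fun n => (z n).1) (fun n => (z n).2)
      (fun n => hz n (n + 1) (Nat.lt_succ_self n)) fun n => sum_mem_span_image' x _
    obtain ⟨χ, L, hχ, hL, hL1⟩ := H _ (hv.normalize hv0)
    refine ⟨χ, hχ, fun ε hε => ?_⟩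
    obtain ⟨δ, hδ, hδ1, hδε⟩ : ∃ δ : ℝ, 0 < δ ∧ δ ≤ 1 ∧ 3 * δ ≤ ε :=
      ⟨min 1 (ε / 3), by positivity, min_le_left _ _, by linarith [min_le_right 1 (ε / 3)]⟩
    obtain ⟨N, hN⟩ := hD δ hδ
    obtain ⟨N', hN'⟩ := hL δ hδ
    refine ⟨max N N', fun n m hn hm => ?_⟩
    have h1 := hN _ (((le_max_left _ _).trans hn).trans hχ.le_apply)
    have h2 := hN _ ((((le_max_left _ _).trans hn).trans hm.le).trans hχ.le_apply)
    have h3 := hN' n m ((le_max_right _ _).trans hn) hm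
    have h4 : ‖v (χ n) + v (χ m)‖ ≤ (1 + δ) * (1 + δ) := by
      refine norm_add_le_of_normalize (by simp only [v]; linarith) (by simp only [v]; linarith)
        (hv0 _) (hv0 _) hδ.le ?_
      have := (abs_lt.1 h3).2
      simp only [Function.comp_apply] at this
      linarith
    rw [Finset.sum_union (hz _ _ (hχ hm)).disjoint]
    change ‖v (χ n) + v (χ m)‖ - 1 ≤ ε
    nlinarith

/-- Some subsequence has uniformly bounded partial sums. -/
lemma SmallPairs.exists_partial {e x : ℕ → X} {K : ℝ} (hK : BasisConst e K) (H : SmallPairs e)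
    (hx : NBlk e x) : ∃ ψ : ℕ → ℕ, StrictMono ψ ∧
      ∀ n, ‖∑ i ∈ (Finset.range n).image ψ, x i‖ ≤ 2 * K := by
  let B := sumSystem hK H hx
  let Q : Finset ℕ → Prop := fun F => ∀ G, Init G F → ‖∑ i ∈ G, x i‖ ≤ 2 * K
  have hQ : ∀ G F, Init G F → Q F → Q G := fun G F h hF G' h' => hF G' (h'.trans h)
  let T : Finset ℕ → {F : Finset ℕ // F.Nonempty} → Prop := fun F u => Bef F u.1 ∧ ¬ Q (F ∪ u.1)
  have hTc : ∀ F, B.Closed (T F) := by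
    intro F a b ha hb hab
    refine ⟨ha.1.union_right hb.1, fun h => ha.2 (hQ _ _ ?_ h)⟩
    have : Bef (F ∪ a.1) b.1 := hb.1.union_left hab
    have h1 := this.init_union
    rwa [Finset.union_assoc] at h1
  have hbef : ∀ F, B.Dense fun u => Bef F u.1 :=
    B.dense_bef (fun u => u.1) (fun u => u.2) fun _ _ h => h
  refine (exists_infinite_of_chain (P := fun F => ¬ B.Dense (T F)) (Q := Q) ?_ ?_ ?_ hQ).imp
    fun ψ h => ⟨h.1, fun n => h.2 n _ ⟨subset_rfl, fun _ _ _ h h' => absurd h h'⟩⟩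
  · -- the singletons generate no admissible sequence outside `Q`
    intro hd
    obtain ⟨w, hw, hw'⟩ := hd (fun n => ⟨{n}, Finset.singleton_nonempty n⟩)
      ⟨fun n m h i hi j hj => by
        rw [Finset.mem_singleton] at hi hj
        omega, fun ε hε => ⟨0, fun n _ => by
          change ‖∑ i ∈ {n}, x i‖ - 1 ≤ ε
          rw [Finset.sum_singleton, hx.2]
          linarith⟩⟩
    obtain ⟨N, hN⟩ := hw.2 1 one_pos
    have h1 : ‖∑ i ∈ (w N).1, x i‖ - 1 ≤ 1 := hN N le_rfl
    refine (hw' N).2.2 fun G hG => ?_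
    rw [Finset.empty_union] at hG
    have h2 := hx.1.sum_le hK (fun _ => 1) hG.1 hG.2
    simp only [one_smul] at h2
    have h3 := hK.1
    nlinarith
  · -- if `T G` is dense for all `G` strictly containing `F`, then so is `T F`
    intro F hF
    by_contra hno
    push Not at hno
    have hext : ∀ G : Finset ℕ, G.Nonempty → Bef F G → B.Dense (T (F ∪ G)) := by
      intro G hG hFG
      refine hno _ ((Finset.ssubset_iff_subset_ne).2 ⟨Finset.subset_union_left, fun h => ?_⟩)
      obtain ⟨k, hk⟩ := hG
      have : k ∈ F := by rw [h]; exact Finset.mem_union_right _ hk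
      exact lt_irrefl _ (hFG k this k hk)
    refine hF fun z hz => ?_
    let T' : ℕ → {F : Finset ℕ // F.Nonempty} → Prop := fun i u => Nat.casesOn i (Bef F u.1)
      fun i => ∀ G : Finset ℕ, Encodable.encode G = i → G.Nonempty → Bef F G → T (F ∪ G) u
    have hd : ∀ i, B.Dense (T' i) := by
      intro i
      cases i with
      | zero => exact hbef F
      | succ i =>
        by_cases hG : ∃ G : Finset ℕ, Encodable.encode G = i ∧ G.Nonempty ∧ Bef F G
        · obtain ⟨G, rfl, h1, h2⟩ := hG
          refine (hext G h1 h2).mono fun u hu G' hG' _ _ => ?_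
          rw [Encodable.encode_injective hG']
          exact hu
        · exact (hbef F).mono fun u _ G h1 h2 h3 => absurd ⟨G, h1, h2, h3⟩ hG
    have hc : ∀ i, B.Closed (T' i) := by
      intro i
      cases i with
      | zero => exact fun a b ha hb _ => Bef.union_right ha hb
      | succ i =>
        exact fun a b ha hb hab G h1 h2 h3 =>
          hTc _ _ _ (ha G h1 h2 h3) (hb G h1 h2 h3) hab
    obtain ⟨a, b, hab, hadm, h⟩ := BlockSystem.exists_pairs hd hc
      (fun a => Encodable.encode a.1 + 1) hz
    refine ⟨_, hadm, fun n => ⟨.op (h n).1 (h n).2.1 (hab n), ?_⟩⟩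
    have h1 : T (F ∪ (a n).1) (b n) := (h n).2.2.2 _ le_rfl _ rfl (a n).2 (h n).2.2.1
    refine ⟨Bef.union_right (h n).2.2.1 (h1.1.mono_left Finset.subset_union_left), ?_⟩
    have h2 := h1.2
    rw [Finset.union_assoc] at h2
    exact h2
  · intro F hF
    by_contra hFQ
    exact hF ((hbef F).mono fun u hu => ⟨hu, fun h => hFQ (hQ _ _ hu.init_union h)⟩)

/-- Galvin's lemma upgrades bounded partial sums to bounded finite sums. -/
lemma SmallPairs.exists_bounded {e x : ℕ → X} {K : ℝ} (hK : BasisConst e K) (H : SmallPairs e)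
    (hx : NBlk e x) : ∃ φ : ℕ → ℕ, StrictMono φ ∧
      ∀ F : Finset ℕ, ‖∑ i ∈ F, x (φ i)‖ ≤ 2 * K := by
  obtain ⟨φ, hφ, h⟩ := galvin {F | 2 * K < ‖∑ i ∈ F, x i‖}
  refine ⟨φ, hφ, ?_⟩
  rcases h with h | h
  · intro F
    have h1 : ¬ 2 * K < ‖∑ i ∈ F.image φ, x i‖ := h F
    rw [Finset.sum_image fun i _ j _ hij => hφ.injective hij] at h1
    exact not_lt.1 h1
  · obtain ⟨ψ, hψ, h1⟩ := H.exists_partial hK (hx.comp hφ)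
    obtain ⟨n, hn⟩ := h ψ hψ
    change 2 * K < ‖∑ i ∈ (Finset.range n).image (φ ∘ ψ), x i‖ at hn
    have h2 := h1 n
    rw [← Finset.image_image, Finset.sum_image fun i _ j _ hij => hφ.injective hij] at hn
    exact absurd hn (not_lt.2 h2)

lemma norm_sum_smul_le {x : ℕ → X} {C : ℝ} (h : ∀ F : Finset ℕ, ‖∑ i ∈ F, x i‖ ≤ C)
    (F : Finset ℕ) (b : ℕ → ℝ) {β : ℝ} (hβ : 0 ≤ β) (hb : ∀ i ∈ F, |b i| ≤ β) :
    ‖∑ i ∈ F, b i • x i‖ ≤ 2 * C * β := by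
  obtain ⟨f, hf, hfv⟩ := exists_dual_vector'' ℝ (∑ i ∈ F, b i • x i)
  have h1 : ∀ G : Finset ℕ, |f (∑ i ∈ G, x i)| ≤ C := fun G => by
    have := f.le_of_opNorm_le hf (∑ i ∈ G, x i)
    rw [one_mul] at this
    exact this.trans (h G)
  have h2 : ∑ i ∈ F, |f (x i)| ≤ 2 * C := by
    rw [← Finset.sum_filter_add_sum_filter_not F (fun i => 0 ≤ f (x i))]
    have e1 : ∑ i ∈ F with 0 ≤ f (x i), |f (x i)| = f (∑ i ∈ F with 0 ≤ f (x i), x i) := by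
      rw [map_sum]
      exact Finset.sum_congr rfl fun i hi => abs_of_nonneg (Finset.mem_filter.1 hi).2
    have e2 : ∑ i ∈ F with ¬ 0 ≤ f (x i), |f (x i)| = -f (∑ i ∈ F with ¬ 0 ≤ f (x i), x i) := by
      rw [map_sum, ← Finset.sum_neg_distrib]
      exact Finset.sum_congr rfl fun i hi => abs_of_nonpos (not_le.1 (Finset.mem_filter.1 hi).2).le
    rw [e1, e2]
    have := abs_le.1 (h1 {i ∈ F | 0 ≤ f (x i)})
    have := abs_le.1 (h1 {i ∈ F | ¬ 0 ≤ f (x i)})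
    linarith
  have h3 : ‖∑ i ∈ F, b i • x i‖ = ∑ i ∈ F, b i * f (x i) := by
    have : f (∑ i ∈ F, b i • x i) = ‖∑ i ∈ F, b i • x i‖ := by simpa using hfv
    rw [← this, map_sum]
    simp
  rw [h3]
  calc ∑ i ∈ F, b i * f (x i) ≤ ∑ i ∈ F, β * |f (x i)| := by
        refine Finset.sum_le_sum fun i hi => (le_abs_self _).trans ?_
        rw [abs_mul]
        exact mul_le_mul_of_nonneg_right (hb i hi) (abs_nonneg _)
    _ = β * ∑ i ∈ F, |f (x i)| := by rw [Finset.mul_sum]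
    _ ≤ _ := by nlinarith

lemma SmallPairs.exists_c0 [CompleteSpace X] {e x : ℕ → X} {K : ℝ} (hK : BasisConst e K)
    (H : SmallPairs e) (hx : NBlk e x) :
    ∃ T : ZeroAtInftyContinuousMap ℕ ℝ →L[ℝ] X, ∃ c : ℝ, 0 < c ∧ ∀ v, c * ‖v‖ ≤ ‖T v‖ := by
  obtain ⟨φ, hφ, hb⟩ := H.exists_bounded hK hx
  have hy := hx.comp hφ
  have hK1 := hK.1
  have hle : ∀ (v : ZeroAtInftyContinuousMap ℕ ℝ) i, |v i| ≤ ‖v‖ := fun v i => by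
    rw [← ZeroAtInftyContinuousMap.norm_toBCF_eq_norm]
    exact v.toBCF.norm_coe_le_norm i
  have hsum : ∀ v : ZeroAtInftyContinuousMap ℕ ℝ, Summable fun i => v i • x (φ i) := by
    intro v
    rw [summable_iff_vanishing_norm]
    intro ε hε
    have h1 := v.zero_at_infty'
    rw [Filter.cocompact_eq_cofinite] at h1
    have hδ : 0 < ε / (8 * K) := by positivity
    have h2 := h1.eventually (Metric.ball_mem_nhds 0 hδ)
    rw [Filter.eventually_cofinite] at h2
    refine ⟨h2.toFinset, fun t ht => ?_⟩
    refine (norm_sum_smul_le hb t v hδ.le fun i hi => ?_).trans_lt ?_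
    · have h3 := Finset.disjoint_left.1 ht hi
      rw [Set.Finite.mem_toFinset] at h3
      simp only [Set.mem_ofPred_eq, not_not] at h3
      have h4 : dist (v i) 0 < ε / (8 * K) := h3
      rw [Real.dist_eq, sub_zero] at h4
      exact h4.le
    · have : 2 * (2 * K) * (ε / (8 * K)) = ε / 2 := by field_simp; norm_num
      rw [this]; linarith
  let T₀ : ZeroAtInftyContinuousMap ℕ ℝ →ₗ[ℝ] X :=
    { toFun := fun v => ∑' i, v i • x (φ i)
      map_add' := fun v w => by
        rw [← (hsum v).tsum_add (hsum w)]
        simp only [ZeroAtInftyContinuousMap.add_apply, add_smul]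
      map_smul' := fun c v => by
        simp only [RingHom.id_apply]
        rw [← (hsum v).tsum_const_smul]
        simp only [ZeroAtInftyContinuousMap.smul_apply, smul_smul, smul_eq_mul] }
  have hT : ∀ v, Tendsto (fun n => ‖∑ i ∈ Finset.range n, v i • x (φ i)‖) atTop (𝓝 ‖T₀ v‖) :=
    fun v => (hsum v).hasSum.tendsto_sum_nat.norm
  refine ⟨T₀.mkContinuous (2 * (2 * K)) fun v => ?_, 1 / (2 * K), by positivity, fun v => ?_⟩
  · exact le_of_tendsto' (hT v) fun n => norm_sum_smul_le hb _ v (norm_nonneg _) fun i _ => hle v i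
  · rw [LinearMap.mkContinuous_apply, one_div, inv_mul_le_iff₀ (by positivity),
      ← ZeroAtInftyContinuousMap.norm_toBCF_eq_norm,
      BoundedContinuousFunction.norm_le (by positivity)]
    intro i
    refine ge_of_tendsto ((hT v).const_mul (2 * K)) ?_
    filter_upwards [eventually_gt_atTop i] with n hn
    exact hy.coeff_le hK v (Finset.mem_range.2 hn)

end CZero
end

noncomputable section
open Filter Topology

/-! ### Convex blocks -/

/-- A finitely supported probability weight on `ℕ`, carried by `s`. -/
structure Wt where
  s : Finset ℕ
  w : ℕ → ℝ
  nonneg : ∀ i, 0 ≤ w i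
  supp : ∀ i, i ∉ s → w i = 0
  sum : ∑ i ∈ s, w i = 1

namespace Wt

lemma nonempty (u : Wt) : u.s.Nonempty := by
  rw [Finset.nonempty_iff_ne_empty]
  intro h
  have := u.sum
  rw [h, Finset.sum_empty] at this
  exact zero_ne_one this

lemma exists_pos (u : Wt) : ∃ i ∈ u.s, 0 < u.w i := by
  by_contra! h
  have := Finset.sum_nonpos h
  rw [u.sum] at this
  linarith

lemma sum_superset (u : Wt) {t : Finset ℕ} (h : u.s ⊆ t) : ∑ i ∈ t, u.w i = 1 := by
  rw [← u.sum]
  exact (Finset.sum_subset h fun i _ hi => u.supp i hi).symm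

/-- The average of two weights. -/
def avg (a b : Wt) : Wt where
  s := a.s ∪ b.s
  w i := (a.w i + b.w i) / 2
  nonneg i := by have := a.nonneg i; have := b.nonneg i; positivity
  supp i hi := by
    rw [Finset.mem_union, not_or] at hi
    rw [a.supp i hi.1, b.supp i hi.2]; norm_num
  sum := by
    rw [← Finset.sum_div, Finset.sum_add_distrib, a.sum_superset Finset.subset_union_left,
      b.sum_superset Finset.subset_union_right]
    norm_num

/-- The point mass at `n`. -/
def dirac (n : ℕ) : Wt where
  s := {n}
  w i := if i = n then 1 else 0
  nonneg i := by split_ifs <;> norm_num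
  supp i hi := by
    rw [Finset.mem_singleton] at hi
    rw [if_neg hi]
  sum := by simp

/-- The measure of a finite set. -/
def mass (u : Wt) (G : Finset ℕ) : ℝ := ∑ i ∈ G, u.w i

lemma mass_avg (a b : Wt) (G : Finset ℕ) : (avg a b).mass G = (a.mass G + b.mass G) / 2 := by
  simp only [mass, avg, ← Finset.sum_div, Finset.sum_add_distrib]

lemma mass_mono (u : Wt) {G H : Finset ℕ} (h : ∀ i ∈ G, i ∈ u.s → i ∈ H) :
    u.mass G ≤ u.mass H := by
  have h1 : u.mass G = ∑ i ∈ G ∩ u.s, u.w i :=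
    (Finset.sum_subset Finset.inter_subset_left fun i hi hi' =>
      u.supp i fun h => hi' (Finset.mem_inter.2 ⟨hi, h⟩)).symm
  rw [h1]
  refine Finset.sum_le_sum_of_subset_of_nonneg (fun i hi => ?_) fun i _ _ => u.nonneg i
  exact h i (Finset.mem_inter.1 hi).1 (Finset.mem_inter.1 hi).2

lemma mass_le_one (u : Wt) (G : Finset ℕ) : u.mass G ≤ 1 := by
  rw [← u.sum]
  exact u.mass_mono fun i _ hi => hi

variable {X : Type*} [NormedAddCommGroup X] [NormedSpace ℝ X]

/-- The convex combination of `y` with weights `u`. -/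
def vec (y : ℕ → X) (u : Wt) : X := ∑ i ∈ u.s, u.w i • y i

lemma vec_superset (y : ℕ → X) (u : Wt) {t : Finset ℕ} (h : u.s ⊆ t) :
    ∑ i ∈ t, u.w i • y i = vec y u :=
  (Finset.sum_subset h fun i _ hi => by rw [u.supp i hi, zero_smul]).symm

lemma vec_avg (y : ℕ → X) (a b : Wt) : vec y (avg a b) = (2⁻¹ : ℝ) • (vec y a + vec y b) := by
  rw [← vec_superset y a (t := a.s ∪ b.s) Finset.subset_union_left,
    ← vec_superset y b (t := a.s ∪ b.s) Finset.subset_union_right, ← Finset.sum_add_distrib,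
    Finset.smul_sum]
  refine Finset.sum_congr rfl fun i _ => ?_
  rw [← add_smul, smul_smul]
  simp only [avg]
  congr 1
  ring

lemma norm_vec_le {y : ℕ → X} (hy : ∀ n, ‖y n‖ = 1) (u : Wt) : ‖vec y u‖ ≤ 1 := by
  refine (norm_sum_le _ _).trans (le_of_eq ?_)
  rw [← u.sum]
  refine Finset.sum_congr rfl fun i _ => ?_
  rw [norm_smul, hy, mul_one, Real.norm_eq_abs, abs_of_nonneg (u.nonneg i)]

end Wt

section LOne

variable {X : Type*} [NormedAddCommGroup X] [NormedSpace ℝ X]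

/-- Probability weights under averaging, with defect `1 - ‖∑ i, u i • y i‖`. -/
def avgSystem {e y : ℕ → X} {K : ℝ} (hK : BasisConst e K) (H : ∀ y, NBlk e y → HasTwo y)
    (hy : NBlk e y) : BlockSystem Wt where
  op := Wt.avg
  lt a b := Bef a.s b.s
  D u := 1 - ‖u.vec y‖
  trans a b c hab hbc := fun i hi j hj => by
    obtain ⟨k, hk⟩ := b.nonempty
    exact (hab i hi k hk).trans (hbc k hk j hj)
  op_lt _ _ _ h h' := h.union_left h'
  lt_op _ _ _ h h' := h.union_right h'
  ev z hz a := exists_bef (fun n => (z n).nonempty) hz a.s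
  good z hz hD := by
    let v : ℕ → X := fun n => (z n).vec y
    have hv0 : ∀ n, v n ≠ 0 := by
      intro n h0
      obtain ⟨k, hk, hpos⟩ := (z n).exists_pos
      have h1 := hy.coeff_le hK (z n).w hk
      change |(z n).w k| ≤ 2 * K * ‖v n‖ at h1
      rw [h0, norm_zero, mul_zero, abs_of_pos hpos] at h1
      linarith
    have hv : Blk e v := hy.1.of_blocks (J := fun n => (z n).s) (fun n => (z n).nonempty)
      (fun n => hz n (n + 1) (Nat.lt_succ_self n)) fun n => sum_mem_span_image y _ _
    have hv1 : ∀ n, ‖v n‖ ≤ 1 := fun n => (z n).norm_vec_le hy.2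
    have hdist : ∀ n, ‖‖v n‖⁻¹ • v n - v n‖ = 1 - ‖v n‖ := by
      intro n
      have h1 : 0 < ‖v n‖ := norm_pos_iff.2 (hv0 n)
      have h2 : ‖v n‖⁻¹ • v n - v n = (‖v n‖⁻¹ - 1) • v n := by rw [sub_smul, one_smul]
      rw [h2, norm_smul, Real.norm_eq_abs, abs_of_nonneg
        (sub_nonneg.2 ((one_le_inv₀ h1).2 (hv1 n))), sub_mul, inv_mul_cancel₀ h1.ne', one_mul]
    obtain ⟨χ, hχ, hL⟩ := H _ (hv.normalize hv0)
    refine ⟨χ, hχ, fun ε hε => ?_⟩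
    obtain ⟨N, hN⟩ := hD (ε / 2) (by positivity)
    obtain ⟨N', hN'⟩ := hL (ε / 2) (by positivity)
    refine ⟨max N N', fun n m hn hm => ?_⟩
    have h1 : 1 - ‖v (χ n)‖ ≤ ε / 2 := hN _ (((le_max_left _ _).trans hn).trans hχ.le_apply)
    have h2 : 1 - ‖v (χ m)‖ ≤ ε / 2 :=
      hN _ ((((le_max_left _ _).trans hn).trans hm.le).trans hχ.le_apply)
    have h3 := (abs_lt.1 (hN' n m ((le_max_right _ _).trans hn) hm)).1
    simp only [Function.comp_apply] at h3
    have h4 : ‖‖v (χ n)‖⁻¹ • v (χ n) + ‖v (χ m)‖⁻¹ • v (χ m)‖ ≤ ‖v (χ n) + v (χ m)‖ +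
        ((1 - ‖v (χ n)‖) + (1 - ‖v (χ m)‖)) := by
      rw [← hdist, ← hdist]
      calc _ = ‖(v (χ n) + v (χ m)) + ((‖v (χ n)‖⁻¹ • v (χ n) - v (χ n)) +
            (‖v (χ m)‖⁻¹ • v (χ m) - v (χ m)))‖ := by congr 1; abel
        _ ≤ _ := (norm_add_le _ _).trans (by gcongr; exact norm_add_le _ _)
    rw [Wt.vec_avg, norm_smul]
    change 1 - ‖(2⁻¹ : ℝ)‖ * ‖v (χ n) + v (χ m)‖ ≤ ε
    rw [Real.norm_eq_abs, abs_of_nonneg (by norm_num)]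
    linarith

/-- If a hereditary family `Q` has no infinite set all of whose initial segments lie in `Q`, then
weights giving small mass to every member of `Q` are dense. -/
lemma dense_small {e y : ℕ → X} {K : ℝ} (hK : BasisConst e K) (H : ∀ y, NBlk e y → HasTwo y)
    (hy : NBlk e y) {Q : Finset ℕ → Prop} (hQ : ∀ G F, G ⊆ F → Q F → Q G)
    (hno : ¬ ∃ ψ : ℕ → ℕ, StrictMono ψ ∧ ∀ n, Q ((Finset.range n).image ψ)) {ε : ℝ} (hε : 0 < ε) :
    (avgSystem hK H hy).Dense fun u => ∀ G, Q G → u.mass G ≤ ε := by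
  let B := avgSystem hK H hy
  let T : Finset ℕ → ℝ → Wt → Prop := fun F ε u =>
    Bef F u.s ∧ ∀ G, Bef F G → Q (F ∪ G) → u.mass G ≤ ε
  have hTc : ∀ F ε, B.Closed (T F ε) := by
    intro F ε a b ha hb _
    refine ⟨ha.1.union_right hb.1, fun G h1 h2 => ?_⟩
    have e1 := ha.2 G h1 h2
    have e2 := hb.2 G h1 h2
    change (Wt.avg a b).mass G ≤ ε
    rw [Wt.mass_avg]
    linarith
  have hbef : ∀ F, B.Dense fun u => Bef F u.s :=
    B.dense_bef (fun u => u.s) (fun u => u.nonempty) fun _ _ h => h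
  by_contra hnd
  refine hno (exists_infinite_of_chain (P := fun F => ∃ ε > 0, ¬ B.Dense (T F ε)) (Q := Q)
    ⟨ε, hε, fun h => hnd (h.mono fun u hu G hG => hu.2 G (fun i hi => by simp at hi)
      (by rwa [Finset.empty_union]))⟩ ?_ ?_ fun G F h => hQ G F h.1)
  · rintro F ⟨ε, hε, hF⟩
    by_contra hno
    have hext : ∀ i, Bef F {i} → ∀ ε > 0, B.Dense (T (F ∪ {i}) ε) := by
      intro i hi ε hε
      by_contra h
      refine hno ⟨F ∪ {i}, (Finset.ssubset_iff_subset_ne).2 ⟨Finset.subset_union_left,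
        fun h' => ?_⟩, ε, hε, h⟩
      have : i ∈ F := by rw [h']; simp
      exact lt_irrefl _ (hi i this i (by simp))
    -- halving the bound repeatedly: in an average of `a` and `b` as given by `exists_pairs`, a set
    -- `G` with `Q (F ∪ G)` that meets the support of `a` has mass at most `ε` for `b`
    have hk : ∀ k : ℕ, ∀ ε > 0, B.Dense (T F ((1 / 2) ^ k + ε)) := by
      intro k
      induction k with
      | zero =>
        intro ε hε
        refine (hbef F).mono fun u hu => ⟨hu, fun G _ _ => (u.mass_le_one G).trans ?_⟩
        rw [pow_zero]; linarith
      | succ k ih =>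
        intro ε hε z hz
        let T' : ℕ → Wt → Prop := fun i u => Nat.casesOn i (T F ((1 / 2) ^ k + ε) u)
          fun i => Bef F {i} → T (F ∪ {i}) ε u
        have hd : ∀ i, B.Dense (T' i) := by
          intro i
          cases i with
          | zero => exact ih ε hε
          | succ i =>
            by_cases hi : Bef F {i}
            · exact (hext i hi ε hε).mono fun u hu _ => hu
            · exact (hbef F).mono fun u _ h => absurd h hi
        have hc : ∀ i, B.Closed (T' i) := by
          intro i
          cases i with
          | zero => exact hTc _ _
          | succ i => exact fun a b ha hb hab h => hTc _ _ _ _ (ha h) (hb h) hab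
        obtain ⟨a, b, hab, hadm, h⟩ := BlockSystem.exists_pairs hd hc
          (fun a => a.s.sup id + 1) hz
        refine ⟨_, hadm, fun n => ⟨.op (h n).1 (h n).2.1 (hab n), ?_⟩⟩
        obtain ⟨-, -, ha, hb⟩ := h n
        have ha' : T F ((1 / 2) ^ k + ε) (a n) := ha
        have hb0 : T F ((1 / 2) ^ k + ε) (b n) := hb 0 (Nat.zero_le _)
        refine ⟨ha'.1.union_right hb0.1, fun G hFG hG => ?_⟩
        have e1 := ha'.2 G hFG hG
        have e2 := hb0.2 G hFG hG
        change (Wt.avg (a n) (b n)).mass G ≤ _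
        rw [Wt.mass_avg, pow_succ]
        by_cases hi : ∃ i ∈ G, i ∈ (a n).s
        · obtain ⟨i, hiG, hia⟩ := hi
          have hFi : Bef F {i} := fun j hj l hl => by
            rw [Finset.mem_singleton.1 hl]; exact hFG j hj i hiG
          have hbi : T (F ∪ {i}) ε (b n) :=
            hb (i + 1) (Nat.succ_le_succ (Finset.le_sup (f := id) hia)) hFi
          have e3 : (b n).mass (G.filter (i < ·)) ≤ ε := by
            refine hbi.2 _ (Bef.union_left (fun j hj l hl => hFG j hj l (Finset.mem_filter.1 hl).1)
              fun j hj l hl => ?_) (hQ _ _ ?_ hG)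
            · rw [Finset.mem_singleton.1 hj]; exact (Finset.mem_filter.1 hl).2
            · intro j hj
              simp only [Finset.mem_union, Finset.mem_singleton, Finset.mem_filter] at hj ⊢
              rcases hj with (hj | rfl) | hj
              · exact Or.inl hj
              · exact Or.inr hiG
              · exact Or.inr hj.1
          have e4 : (b n).mass G ≤ (b n).mass (G.filter (i < ·)) :=
            (b n).mass_mono fun j hj hjb => Finset.mem_filter.2 ⟨hj, hab n i hia j hjb⟩
          linarith
        · push Not at hi
          have e3 : (a n).mass G = 0 := Finset.sum_eq_zero fun i hiG => (a n).supp i (hi i hiG)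
          rw [e3]
          have : (0 : ℝ) ≤ (1 / 2) ^ k := by positivity
          linarith
    obtain ⟨k, hk'⟩ := exists_pow_lt_of_lt_one (half_pos hε) (by norm_num : (1 / 2 : ℝ) < 1)
    refine hF ((hk k (ε / 2) (half_pos hε)).mono fun u hu => ⟨hu.1, fun G h1 h2 =>
      (hu.2 G h1 h2).trans ?_⟩)
    linarith
  · rintro F ⟨ε, hε, hF⟩
    by_contra hFQ
    exact hF ((hbef F).mono fun u hu => ⟨hu, fun G _ h =>
      absurd (hQ _ _ Finset.subset_union_left h) hFQ⟩)

end LOne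
end

noncomputable section
open Filter Topology

/-! ### Large pair sums give a copy of the space of summable sequences -/

section LOneMain

variable {X : Type*} [NormedAddCommGroup X] [NormedSpace ℝ X]

/-- One functional of norm at most `1` separates `x (2 * j)` from `x (2 * j + 1)` across the gap
`[r - η, r + η]` for all `j ∈ F`. -/
def Separated (x : ℕ → X) (r η : ℝ) (F : Finset ℕ) : Prop :=
  ∃ f : X →L[ℝ] ℝ, ‖f‖ ≤ 1 ∧ ∀ j ∈ F, r + η ≤ f (x (2 * j)) ∧ f (x (2 * j + 1)) ≤ r - η

lemma Wt.mass_biUnion_le {ι : Type*} (u : Wt) (R : Finset ι) (G : ι → Finset ℕ) :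
    u.mass (R.biUnion G) ≤ ∑ m ∈ R, u.mass (G m) := by
  classical
  induction R using Finset.induction_on with
  | empty => simp [Wt.mass]
  | insert a R ha ih =>
    rw [Finset.biUnion_insert, Finset.sum_insert ha]
    have h1 := Finset.sum_union_inter (s₁ := G a) (s₂ := R.biUnion G) (f := u.w)
    have h2 : 0 ≤ ∑ i ∈ G a ∩ R.biUnion G, u.w i := Finset.sum_nonneg fun i _ => u.nonneg i
    simp only [Wt.mass] at ih ⊢
    linarith

/-- The levels of the gaps: a grid of step `1 / (4 * K)`. -/
def level (K : ℝ) (m : ℤ) : ℝ := m / (4 * K)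

/-- The indices of the levels that matter for functionals of norm at most `1` on unit vectors. -/
def levels (K : ℝ) : Finset ℤ := Finset.Icc (-⌈8 * K⌉) ⌈8 * K⌉

/-- Two values in `[-1, 1]` at distance at least `1 / (2 * K)` straddle a gap of the grid. -/
lemma exists_level {K : ℝ} (hK : 1 ≤ K) {α β : ℝ} (hα : |α| ≤ 1) (h : α + 1 / (2 * K) ≤ β) :
    ∃ m ∈ levels K, level K m + 1 / (8 * K) ≤ β ∧ α ≤ level K m - 1 / (8 * K) := by
  have hK0 : 0 < K := by linarith
  have h1 : 1 / (2 * K) = 4 * (1 / (8 * K)) := by field_simp; norm_num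
  have h2 : (1 / (8 * K)) * (8 * K) = 1 := by field_simp
  set η := 1 / (8 * K) with hη
  have hη0 : 0 < η := by positivity
  have hlev : ∀ m : ℤ, level K m = 2 * η * m := by
    intro m; simp only [level, hη]; field_simp; ring
  have e1 := Int.le_ceil ((α + η) * (4 * K))
  have e2 := Int.ceil_lt_add_one ((α + η) * (4 * K))
  set m := ⌈(α + η) * (4 * K)⌉ with hm
  have e3 : α + η ≤ 2 * η * m := by
    have := mul_le_mul_of_nonneg_left e1 (by positivity : 0 ≤ 2 * η)
    have h3 : 2 * η * ((α + η) * (4 * K)) = (α + η) * (η * (8 * K)) := by ring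
    rw [h3, h2] at this
    linarith
  have e4 : 2 * η * m ≤ α + 3 * η := by
    have := mul_le_mul_of_nonneg_left e2.le (by positivity : 0 ≤ 2 * η)
    have h3 : 2 * η * ((α + η) * (4 * K) + 1) = (α + η) * (η * (8 * K)) + 2 * η := by ring
    rw [h3, h2] at this
    linarith
  have hα' := abs_le.1 hα
  refine ⟨m, ?_, by rw [hlev]; linarith, by rw [hlev]; linarith⟩
  rw [levels, Finset.mem_Icc]
  have e5 := Int.le_ceil (8 * K)
  have hηK : η * K = 1 / 8 := by linarith
  constructor
  · have : -(⌈8 * K⌉ : ℝ) ≤ m := by nlinarith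
    exact_mod_cast this
  · have : (m : ℝ) < (⌈8 * K⌉ : ℝ) + 1 := by nlinarith
    have : m < ⌈8 * K⌉ + 1 := by exact_mod_cast this
    omega

/-- A single level serves infinitely many pairs `(x (2 * j), x (2 * j + 1))`. -/
lemma exists_separated {e x : ℕ → X} {K : ℝ} (hK : BasisConst e K)
    (H : ∀ y, NBlk e y → HasTwo y) (hx : NBlk e x) :
    ∃ m ∈ levels K, ∃ ψ : ℕ → ℕ, StrictMono ψ ∧
      ∀ n, Separated x (level K m) (1 / (8 * K)) ((Finset.range n).image ψ) := by
  by_contra! hno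
  have hK1 := hK.1
  let d : ℕ → X := fun j => x (2 * j) - x (2 * j + 1)
  have hdb : Blk e d := by
    refine hx.1.of_blocks (J := fun j => {2 * j, 2 * j + 1}) (fun j => by simp)
      (fun n i hi j hj => ?_) fun n => ?_
    · simp only [Finset.mem_insert, Finset.mem_singleton] at hi hj
      omega
    · exact Submodule.sub_mem _ (Submodule.subset_span ⟨2 * n, by simp, rfl⟩)
        (Submodule.subset_span ⟨2 * n + 1, by simp, rfl⟩)
  have hd : ∀ j, 1 ≤ K * ‖d j‖ := by
    intro j
    have h1 := hx.1.split hK (I := {2 * j}) (J := {2 * j + 1}) (u := x (2 * j))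
      (v := -x (2 * j + 1)) (by simp)
      (Submodule.subset_span (by simp))
      (Submodule.neg_mem _ (Submodule.subset_span (by simp)))
    rw [hx.2, ← sub_eq_add_neg] at h1
    exact h1
  have hd0 : ∀ j, d j ≠ 0 := by
    intro j h
    have := hd j
    rw [h, norm_zero, mul_zero] at this
    linarith
  have hy := hdb.normalize hd0
  set y : ℕ → X := fun j => ‖d j‖⁻¹ • d j with hydef
  let B := avgSystem hK H hy
  set R := levels K
  set ε : ℝ := 1 / (2 * ((R.card : ℝ) + 1)) with hε
  have hε0 : 0 < ε := by positivity
  have hdense : B.Dense fun u => ∀ m ∈ R, ∀ G,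
      Separated x (level K m) (1 / (8 * K)) G → u.mass G ≤ ε := by
    refine BlockSystem.dense_finset R (fun m hm => dense_small hK H hy ?_ ?_ hε0) ?_
    · rintro G F hGF ⟨f, hf, h⟩
      exact ⟨f, hf, fun j hj => h j (hGF hj)⟩
    · rintro ⟨ψ, hψ, h⟩
      obtain ⟨n, hn⟩ := hno m hm ψ hψ
      exact hn (h n)
    · intro m _ a b ha hb _ G hG
      have e1 := ha G hG
      have e2 := hb G hG
      change (Wt.avg a b).mass G ≤ ε
      rw [Wt.mass_avg]
      linarith
  obtain ⟨w, hw, hw'⟩ := hdense Wt.dirac ⟨fun n m h i hi j hj => by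
      simp only [Wt.dirac, Finset.mem_singleton] at hi hj
      omega, fun ε hε => ⟨0, fun n _ => by
        change 1 - ‖(Wt.dirac n).vec y‖ ≤ ε
        have : (Wt.dirac n).vec y = y n := by simp [Wt.vec, Wt.dirac]
        rw [this, hy.2]
        linarith⟩⟩
  obtain ⟨N, hN⟩ := hw.2 (1 / 8) (by norm_num)
  have hN1 : 1 - ‖(w N).vec y‖ ≤ 1 / 8 := hN N le_rfl
  set u := w N
  obtain ⟨f, hf, hfv⟩ := exists_dual_vector'' ℝ (u.vec y)
  have hfv' : f (u.vec y) = ‖u.vec y‖ := by simpa using hfv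
  have hfle : ∀ v : X, |f v| ≤ ‖v‖ := fun v => by
    have := f.le_of_opNorm_le hf v
    rwa [one_mul] at this
  -- the terms on which `f` is large carry more than half of the mass
  let G := u.s.filter fun j => 1 / 2 ≤ f (y j)
  have hG : 1 / 2 < u.mass G := by
    have e1 : f (u.vec y) = ∑ j ∈ u.s, u.w j * f (y j) := by
      simp [Wt.vec, map_sum]
    have e2 : ∑ j ∈ u.s, u.w j * f (y j) ≤
        ∑ j ∈ u.s, (u.w j * (1 / 2) + if 1 / 2 ≤ f (y j) then u.w j * (1 / 2) else 0) := by
      refine Finset.sum_le_sum fun j _ => ?_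
      have h1 := u.nonneg j
      have h2 := (le_abs_self _).trans (hfle (y j))
      rw [hy.2] at h2
      split_ifs with h
      · nlinarith
      · nlinarith
    rw [Finset.sum_add_distrib, ← Finset.sum_mul, u.sum, ← Finset.sum_filter, ← Finset.sum_mul]
      at e2
    change _ ≤ 1 * (1 / 2) + u.mass G * (1 / 2) at e2
    linarith
  let Gm : ℤ → Finset ℕ := fun m => u.s.filter fun j =>
    level K m + 1 / (8 * K) ≤ f (x (2 * j)) ∧ f (x (2 * j + 1)) ≤ level K m - 1 / (8 * K)
  have hGm : ∀ m ∈ R, u.mass (Gm m) ≤ ε := fun m hm =>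
    (hw' N).2 m hm _ ⟨f, hf, fun j hj => (Finset.mem_filter.1 hj).2⟩
  have hcov : G ⊆ R.biUnion Gm := by
    intro j hj
    obtain ⟨hjs, hj⟩ := Finset.mem_filter.1 hj
    have h1 : f (y j) = ‖d j‖⁻¹ * (f (x (2 * j)) - f (x (2 * j + 1))) := by
      simp [hydef, d]
    have h2 := hd j
    have hdpos : 0 < ‖d j‖ := norm_pos_iff.2 (hd0 j)
    rw [h1, le_inv_mul_iff₀ hdpos] at hj
    have h3 : 1 / (2 * K) ≤ ‖d j‖ * (1 / 2) := by
      rw [div_le_iff₀ (by positivity)]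
      linarith
    have h4 := hfle (x (2 * j + 1))
    rw [hx.2] at h4
    obtain ⟨m, hm, h5⟩ := exists_level hK1 h4
      (by linarith : f (x (2 * j + 1)) + 1 / (2 * K) ≤ f (x (2 * j)))
    exact Finset.mem_biUnion.2 ⟨m, hm, Finset.mem_filter.2 ⟨hjs, h5⟩⟩
  have h1 : u.mass G ≤ ∑ m ∈ R, u.mass (Gm m) :=
    (u.mass_mono fun i hi _ => hcov hi).trans
      (u.mass_biUnion_le R Gm)
  have h2 := h1.trans (Finset.sum_le_card_nsmul _ _ _ hGm)
  rw [nsmul_eq_mul, hε, mul_one_div, le_div_iff₀ (by positivity)] at h2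
  nlinarith

/-- One functional of norm at most `1` takes alternately values above and below the gap
`[r - η, r + η]` on the vectors `x i`, `i ∈ F`, in increasing order. -/
def Alt (x : ℕ → X) (r η : ℝ) (F : Finset ℕ) : Prop :=
  ∃ f : X →L[ℝ] ℝ, ‖f‖ ≤ 1 ∧ ∀ i ∈ F, if Even (F.filter (· < i)).card then r + η ≤ f (x i)
    else f (x i) ≤ r - η

lemma card_filter_image {φ : ℕ → ℕ} (hφ : StrictMono φ) (F : Finset ℕ) (i : ℕ) :
    ((F.image φ).filter (· < φ i)).card = (F.filter (· < i)).card := by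
  rw [Finset.filter_image, Finset.card_image_of_injective _ hφ.injective]
  simp only [hφ.lt_iff_lt]

lemma Alt.comp {x : ℕ → X} {r η : ℝ} {F : Finset ℕ} {φ : ℕ → ℕ} (hφ : StrictMono φ)
    (h : Alt x r η (F.image φ)) : Alt (x ∘ φ) r η F := by
  obtain ⟨f, hf, h⟩ := h
  refine ⟨f, hf, fun i hi => ?_⟩
  have := h (φ i) (Finset.mem_image_of_mem _ hi)
  rwa [card_filter_image hφ] at this

/-- By Galvin's lemma, applied to each level in turn, the only alternative is an infinite set in
which every infinite subset has a non-alternating initial segment at every level; the pairs provided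
by `exists_separated` exclude this. -/
lemma exists_alt {e x : ℕ → X} {K : ℝ} (hK : BasisConst e K) (H : ∀ y, NBlk e y → HasTwo y)
    (hx : NBlk e x) : ∃ (r : ℝ) (φ : ℕ → ℕ), StrictMono φ ∧
      ∀ F, Alt (x ∘ φ) r (1 / (8 * K)) F := by
  by_contra! hno
  have step : ∀ R : Finset ℤ, ∃ φ : ℕ → ℕ, StrictMono φ ∧ ∀ m ∈ R, ∀ ψ : ℕ → ℕ, StrictMono ψ →
      ∃ n, ¬ Alt x (level K m) (1 / (8 * K)) ((Finset.range n).image (φ ∘ ψ)) := by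
    intro R
    induction R using Finset.induction_on with
    | empty => exact ⟨id, strictMono_id, by simp⟩
    | insert m R _ ih =>
      obtain ⟨φ, hφ, h⟩ := ih
      obtain ⟨φ', hφ', h'⟩ := galvin {F | ¬ Alt x (level K m) (1 / (8 * K)) (F.image φ)}
      rcases h' with h' | h'
      · exfalso
        obtain ⟨F, hF⟩ := hno (level K m) (φ ∘ φ') (hφ.comp hφ')
        refine hF (Alt.comp (hφ.comp hφ') ?_)
        have h1 : ¬ ¬ Alt x (level K m) (1 / (8 * K)) ((F.image φ').image φ) := h' F
        rw [Finset.image_image] at h1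
        exact not_not.1 h1
      · refine ⟨φ ∘ φ', hφ.comp hφ', fun k hk ψ hψ => ?_⟩
        rcases Finset.mem_insert.1 hk with rfl | hk
        · obtain ⟨n, hn⟩ := h' ψ hψ
          refine ⟨n, ?_⟩
          have h1 : ¬ Alt x (level K k) (1 / (8 * K))
            (((Finset.range n).image (φ' ∘ ψ)).image φ) := hn
          rw [Finset.image_image] at h1
          exact h1
        · exact h k hk (φ' ∘ ψ) (hφ'.comp hψ)
  obtain ⟨φ, hφ, h⟩ := step (levels K)
  obtain ⟨m, hm, ψ, hψ, hsep⟩ := exists_separated hK H (hx.comp hφ)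
  have hψ' : StrictMono fun i => 2 * ψ (i / 2) + i % 2 := by
    refine strictMono_nat_of_lt_succ fun i => ?_
    rcases Nat.even_or_odd' i with ⟨j, rfl | rfl⟩
    · have h1 : 2 * j / 2 = j := by omega
      have h2 : (2 * j + 1) / 2 = j := by omega
      rw [h1, h2]; omega
    · have h1 : (2 * j + 1) / 2 = j := by omega
      have h2 : (2 * j + 1 + 1) / 2 = j + 1 := by omega
      rw [h1, h2]
      have := hψ (Nat.lt_succ_self j)
      simp only [Nat.succ_eq_add_one] at this
      omega
  obtain ⟨n, hn⟩ := h m hm _ hψ'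
  obtain ⟨f, hf, hfs⟩ := hsep n
  refine hn ⟨f, hf, fun b hb => ?_⟩
  obtain ⟨i, hi, rfl⟩ := Finset.mem_image.1 hb
  rw [card_filter_image (hφ.comp hψ')]
  have hi' := Finset.mem_range.1 hi
  have h1 : ((Finset.range n).filter (· < i)).card = i := by
    have : (Finset.range n).filter (· < i) = Finset.range i := by
      ext k; simp only [Finset.mem_filter, Finset.mem_range]; omega
    rw [this, Finset.card_range]
  rw [h1]
  have h2 := hfs (ψ (i / 2)) (Finset.mem_image_of_mem _ (Finset.mem_range.2 (by omega)))
  simp only [Function.comp_apply] at h2 ⊢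
  split_ifs with hev
  · rw [Nat.even_iff.1 hev, add_zero]; exact h2.1
  · rw [Nat.not_even_iff.1 hev]; exact h2.2

/-- A finite set containing the odd numbers `2 * k + 1`, `k < n`, in which their positions have
prescribed parities. -/
lemma exists_parity (P : ℕ → Prop) (n : ℕ) : ∃ F : Finset ℕ, (∀ i ∈ F, i < 2 * n) ∧
    ∀ k < n, 2 * k + 1 ∈ F ∧ (Even (F.filter (· < 2 * k + 1)).card ↔ P k) := by
  induction n with
  | zero => exact ⟨∅, by simp, by simp⟩
  | succ n ih =>
    obtain ⟨F, hF, h⟩ := ih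
    -- `2 * n` is inserted exactly when the parity at `2 * n + 1` has to be corrected
    obtain ⟨F', hF', hFF', hpar⟩ : ∃ F' : Finset ℕ, (∀ i ∈ F', i < 2 * n + 1) ∧
        (∀ i, i < 2 * n → (i ∈ F' ↔ i ∈ F)) ∧ (Even F'.card ↔ P n) := by
      by_cases hP : Even F.card ↔ P n
      · exact ⟨F, fun i hi => (hF i hi).trans (Nat.lt_succ_self _), fun _ _ => Iff.rfl, hP⟩
      · refine ⟨insert (2 * n) F, fun i hi => ?_, fun i hi => ?_, ?_⟩
        · rcases Finset.mem_insert.1 hi with rfl | hi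
          · omega
          · exact (hF i hi).trans (Nat.lt_succ_self _)
        · rw [Finset.mem_insert]
          exact ⟨fun h => h.resolve_left (by omega), Or.inr⟩
        · rw [Finset.card_insert_of_notMem fun h => lt_irrefl _ (hF _ h), Nat.even_add_one]
          tauto
    refine ⟨insert (2 * n + 1) F', fun i hi => ?_, fun k hk => ?_⟩
    · rcases Finset.mem_insert.1 hi with rfl | hi
      · omega
      · have := hF' i hi; omega
    · rcases (Nat.lt_succ_iff.1 hk).eq_or_lt with rfl | hk
      · refine ⟨Finset.mem_insert_self _ _, ?_⟩
        have : (insert (2 * k + 1) F').filter (· < 2 * k + 1) = F' := by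
          ext i
          simp only [Finset.mem_filter, Finset.mem_insert]
          constructor
          · rintro ⟨rfl | hi, h⟩
            · omega
            · exact hi
          · exact fun hi => ⟨Or.inr hi, hF' i hi⟩
        rw [this, hpar]
      · obtain ⟨h1, h2⟩ := h k hk
        refine ⟨Finset.mem_insert_of_mem ((hFF' _ (by omega)).2 h1), ?_⟩
        have : (insert (2 * n + 1) F').filter (· < 2 * k + 1) = F.filter (· < 2 * k + 1) := by
          ext i
          simp only [Finset.mem_filter, Finset.mem_insert]
          constructor
          · rintro ⟨rfl | hi, h⟩
            · omega
            · exact ⟨(hFF' i (by omega)).1 hi, h⟩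
          · exact fun hi => ⟨Or.inr ((hFF' i (by omega)).2 hi.1), hi.2⟩
        rw [this, h2]

lemma Alt.lower {z : ℕ → X} {r η : ℝ} (h : ∀ F, Alt z r η F) (b : ℕ → ℝ) (n : ℕ) :
    η * ∑ k ∈ Finset.range n, |b k| ≤ ‖∑ k ∈ Finset.range n, b k • z (2 * k + 1)‖ := by
  have key : ∀ P : ℕ → Prop, ∃ f : X →L[ℝ] ℝ, ‖f‖ ≤ 1 ∧ ∀ k < n,
      (P k → r + η ≤ f (z (2 * k + 1))) ∧ (¬ P k → f (z (2 * k + 1)) ≤ r - η) := by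
    intro P
    obtain ⟨F, -, hF⟩ := exists_parity P n
    obtain ⟨f, hf, hfF⟩ := h F
    refine ⟨f, hf, fun k hk => ?_⟩
    obtain ⟨h1, h2⟩ := hF k hk
    have h3 := hfF _ h1
    constructor
    · intro hP
      rwa [if_pos (h2.2 hP)] at h3
    · intro hP
      rwa [if_neg fun h => hP (h2.1 h)] at h3
  obtain ⟨f, hf, hfP⟩ := key fun k => 0 ≤ b k
  obtain ⟨g, hg, hgP⟩ := key fun k => ¬ 0 ≤ b k
  set v := ∑ k ∈ Finset.range n, b k • z (2 * k + 1) with hv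
  have h1 : (f - g) v ≤ 2 * ‖v‖ := by
    have e1 := f.le_of_opNorm_le hf v
    have e2 := g.le_of_opNorm_le hg v
    rw [Real.norm_eq_abs, one_mul] at e1 e2
    have e3 := le_abs_self (f v)
    have e4 := neg_abs_le (g v)
    rw [sub_apply]
    linarith
  have h2 : 2 * (η * ∑ k ∈ Finset.range n, |b k|) ≤ (f - g) v := by
    rw [hv, map_sum, Finset.mul_sum, Finset.mul_sum]
    refine Finset.sum_le_sum fun k hk => ?_
    have hk := Finset.mem_range.1 hk
    rw [map_smul, smul_eq_mul, sub_apply]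
    by_cases hb : 0 ≤ b k
    · have e1 := (hfP k hk).1 hb
      have e2 := (hgP k hk).2 (not_not.2 hb)
      rw [abs_of_nonneg hb]
      nlinarith
    · have e1 := (hfP k hk).2 hb
      have e2 := (hgP k hk).1 hb
      push Not at hb
      rw [abs_of_neg hb]
      nlinarith
  linarith

lemma exists_l1 [CompleteSpace X] {e x : ℕ → X} {K : ℝ} (hK : BasisConst e K)
    (H : ∀ y, NBlk e y → HasTwo y) (hx : NBlk e x) :
    ∃ T : (lp (fun _ : ℕ => ℝ) 1) →L[ℝ] X, ∃ c : ℝ, 0 < c ∧ ∀ v, c * ‖v‖ ≤ ‖T v‖ := by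
  obtain ⟨r, φ, hφ, halt⟩ := exists_alt hK H hx
  have hK1 := hK.1
  set η := 1 / (8 * K)
  have hη : 0 < η := by positivity
  let z : ℕ → X := fun k => x (φ (2 * k + 1))
  have hz : ∀ k, ‖z k‖ = 1 := fun k => hx.2 _
  have hlow := Alt.lower halt
  have habs : ∀ v : lp (fun _ : ℕ => ℝ) 1, HasSum (fun k => |v k|) ‖v‖ := by
    intro v
    have := lp.hasSum_norm (p := 1) (by norm_num) v
    simpa using this
  have hnorm : ∀ (v : lp (fun _ : ℕ => ℝ) 1) k, ‖v k • z k‖ = |v k| := fun v k => by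
    rw [norm_smul, hz, mul_one, Real.norm_eq_abs]
  have hsn : ∀ v : lp (fun _ : ℕ => ℝ) 1, Summable fun k => ‖v k • z k‖ := fun v => by
    simp only [hnorm]; exact (habs v).summable
  have hsum : ∀ v : lp (fun _ : ℕ => ℝ) 1, Summable fun k => v k • z k := fun v => (hsn v).of_norm
  let T₀ : lp (fun _ : ℕ => ℝ) 1 →ₗ[ℝ] X :=
    { toFun := fun v => ∑' k, v k • z k
      map_add' := fun v w => by
        rw [← (hsum v).tsum_add (hsum w)]
        simp only [lp.coeFn_add, Pi.add_apply, add_smul]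
      map_smul' := fun c v => by
        simp only [RingHom.id_apply]
        rw [← (hsum v).tsum_const_smul]
        simp only [lp.coeFn_smul, Pi.smul_apply, smul_smul, smul_eq_mul] }
  refine ⟨T₀.mkContinuous 1 fun v => ?_, η, hη, fun v => ?_⟩
  · rw [one_mul, ← (habs v).tsum_eq]
    simp only [← hnorm]
    exact norm_tsum_le_tsum_norm (hsn v)
  · rw [LinearMap.mkContinuous_apply]
    exact le_of_tendsto_of_tendsto' ((habs v).tendsto_sum_nat.const_mul η)
      (hsum v).hasSum.tendsto_sum_nat.norm fun n => hlow v n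

end LOneMain

/-! ### Conclusion -/

section Conclusion

variable {X : Type*} [NormedAddCommGroup X] [NormedSpace ℝ X]

lemma IsSchauderBasis.nblk {e : ℕ → X} (he : IsSchauderBasis e) :
    NBlk e fun n => ‖e n‖⁻¹ • e n :=
  Blk.normalize ⟨id, strictMono_id, fun n => Submodule.subset_span ⟨n, by simp, rfl⟩⟩ he.ne_zero

/-- If no spreading model is strictly between the extremes, every normalized block sequence is
extremal along a subsequence. -/
lemma extremal_of_not {e : ℕ → X} {K : ℝ} (hK : BasisConst e K)
    (hno : ¬ ∃ y : ℕ → X, IsBlockBasis e y ∧ (∀ j, ‖y j‖ = 1) ∧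
      ∃ (S : Type) (_ : NormedAddCommGroup S), ∃ (_ : NormedSpace ℝ S) (_ : CompleteSpace S),
        ∃ s : ℕ → S, IsSpreadingModel y s ∧ 1 < ‖s 0 + s 1‖ ∧ ‖s 0 + s 1‖ < 2) :
    Extremal e := by
  intro y hy
  obtain ⟨φ, hφ, S, i1, i2, i3, s, hs⟩ := exists_spreadingModel hK hy
  have hy' := hy.comp hφ
  have hlim := hs.pairLim
  refine ⟨φ, ‖s 0 + s 1‖, hφ, hlim, ?_⟩
  by_contra! h
  have hle : ‖s 0 + s 1‖ ≤ 2 := by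
    refine le_of_forall_pos_le_add fun ε hε => ?_
    obtain ⟨N, hN⟩ := hlim ε hε
    have h1 := (abs_lt.1 (hN N (N + 1) le_rfl (Nat.lt_succ_self N))).1
    have h2 := norm_add_le ((y ∘ φ) N) ((y ∘ φ) (N + 1))
    rw [hy'.2, hy'.2] at h2
    linarith
  exact hno ⟨y ∘ φ, hy'.isBlockBasis, hy'.2, S, i1, i2, i3, s, hs, h.1, lt_of_le_of_ne hle h.2⟩

end Conclusion
end

/-- If a Banach space `X` with a Schauder basis `(e_i)` contains no subspace
isomorphic to `ℓ₁` and no subspace isomorphic to `c₀`, then some normalized block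
basis of `(e_i)` has a spreading model `(s_i)` (in some Banach space) with
`1 < ‖s 0 + s 1‖ < 2`. -/
theorem stmt2 {X : Type*} [NormedAddCommGroup X] [NormedSpace ℝ X] [CompleteSpace X]
    (e : ℕ → X) (he : IsSchauderBasis e)
    (hl1 : ¬ ∃ T : (lp (fun _ : ℕ => ℝ) 1) →L[ℝ] X, ∃ c : ℝ, 0 < c ∧ ∀ v, c * ‖v‖ ≤ ‖T v‖)
    (hc0 : ¬ ∃ T : ZeroAtInftyContinuousMap ℕ ℝ →L[ℝ] X, ∃ c : ℝ, 0 < c ∧ ∀ v, c * ‖v‖ ≤ ‖T v‖) :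
    ∃ y : ℕ → X, IsBlockBasis e y ∧ (∀ j, ‖y j‖ = 1) ∧
      ∃ (S : Type) (_ : NormedAddCommGroup S), ∃ (_ : NormedSpace ℝ S) (_ : CompleteSpace S),
        ∃ s : ℕ → S, IsSpreadingModel y s ∧ 1 < ‖s 0 + s 1‖ ∧ ‖s 0 + s 1‖ < 2 := by
  by_contra hno
  obtain ⟨K, hK⟩ := exists_basisConst he
  rcases (extremal_of_not hK hno).dichotomy hK with H | H
  · exact hl1 (exists_l1 hK H he.nblk)
  · exact hc0 (SmallPairs.exists_c0 hK H he.nblk)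
end
end

section
/- Let (e_i) be a basis of a Banach space X and let (x_i) be a normalized block basis of (e_i) having a spreading model (s_i) such that ‖Σ_{i=1}^k s_i‖ = k for every k ∈ ℕ. Then for every ε > 0 there exists a strictly increasing sequence (n_k) of natural numbers such that for every k, (1/r_k)·‖x_{n_k} + x_{n_{k+1}} + ⋯ + x_{n_{k+r_k−1}}‖ > 1 − ε, where r_k = min supp(x_{n_k}), the support being taken with respect to (e_i). -/
/-!
The spreading-model estimate only controls sums of `m` vectors whose indices are at least `m`.
The sequence `n` is therefore chosen so that `n (k + 1)` exceeds every element of `E (n k)`, in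
particular `r = min supp x (n k)`. Among the `r` vectors `x (n k), …, x (n (k + r - 1))`, all but
the first then have index above `r`, so those `r - 1` vectors have a sum of norm at least
`r - 1 - δ 0`, where `δ` is the error sequence of the spreading model. The first vector has norm
one, so it costs at most one more, and the full sum has norm at least `r - 2 - δ 0`. Since
`r ≥ n k ≥ n 0` (`le_of_mem_block`), starting with `n 0 > (2 + δ 0) / ε` makes `2 + δ 0 < ε r`.
-/

noncomputable section

open scoped Classical

/-- The blocks are nonempty and successive, so the `j`-th one lies in `[j, ∞)`. -/
lemma le_of_mem_block (E : ℕ → Finset ℕ) (hEne : ∀ j, (E j).Nonempty)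
    (hEord : ∀ j, ∀ p ∈ E j, ∀ q ∈ E (j + 1), p < q) :
    ∀ j, ∀ p ∈ E j, j ≤ p := by
  intro j
  induction j with
  | zero => exact fun p _ => Nat.zero_le p
  | succ j ih =>
    intro q hq
    obtain ⟨p, hp⟩ := hEne j
    exact (ih p hp).trans_lt (hEord j p hp q hq)

/-- Let `(x_j)` be a normalized block basis (with representation data `E`, `a`) of a
Schauder basis `(e_i)` of a Banach space `X`, having a spreading model `(s_i)` with
`‖s 0 + ⋯ + s (k-1)‖ = k` for all `k ≥ 1`.  Then for every `ε > 0` there is a strictly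
increasing sequence `(n_k)` such that for all `k`, writing `r = min supp (x (n k))`
(support taken w.r.t. `(e_i)`),
`(1/r) * ‖x (n k) + x (n (k+1)) + ⋯ + x (n (k + r - 1))‖ > 1 - ε`. -/
theorem stmt5 {X : Type*} [NormedAddCommGroup X] [NormedSpace ℝ X] [CompleteSpace X]
    (e : ℕ → X) (he : IsSchauderBasis e)
    (E : ℕ → Finset ℕ) (a : ℕ → ℝ) (x : ℕ → X)
    (hEne : ∀ j, (E j).Nonempty)
    (hEord : ∀ j, ∀ p ∈ E j, ∀ q ∈ E (j + 1), p < q)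
    (hrep : ∀ j, x j = ∑ i ∈ E j, a i • e i)
    (hx0 : ∀ j, x j ≠ 0)
    (hnorm : ∀ j, ‖x j‖ = 1)
    (S : Type) [NormedAddCommGroup S] [NormedSpace ℝ S] [CompleteSpace S]
    (s : ℕ → S) (hs : IsSpreadingModel x s)
    (hl1 : ∀ k : ℕ, 1 ≤ k → ‖∑ i ∈ Finset.range k, s i‖ = (k : ℝ)) :
    ∀ ε : ℝ, 0 < ε → ∃ n : ℕ → ℕ, StrictMono n ∧
      ∀ (k r : ℕ), ((E (n k)).filter (fun i => a i ≠ 0)).min = (r : WithBot ℕ) →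
        (1 / (r : ℝ)) * ‖∑ j ∈ Finset.range r, x (n (k + j))‖ > 1 - ε := by
  intro ε hε
  obtain ⟨-, δ, hδ, hanti, -, hsm⟩ := hs
  obtain ⟨N, hN⟩ := exists_nat_gt ((2 + δ 0) / ε)
  let n : ℕ → ℕ := Nat.rec N fun _ m => m + (E m).sup id + 1
  have hstep : ∀ k, n (k + 1) = n k + (E (n k)).sup id + 1 := fun _ => rfl
  have hmono : StrictMono n := strictMono_nat_of_lt_succ fun k => by rw [hstep]; omega
  refine ⟨n, hmono, fun k r hr => ?_⟩
  -- The coercion of `r` in `hr` goes through `WithBot ℕ`, definitionally the same as `WithTop ℕ`.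
  have hrE : r ∈ E (n k) := (Finset.mem_filter.1 (Finset.mem_of_min hr)).1
  have hNr : N ≤ r := calc
    N = n 0 := rfl
    _ ≤ n k := hmono.monotone (Nat.zero_le k)
    _ ≤ r := le_of_mem_block E hEne hEord _ r hrE
  have hNr' : (N : ℝ) ≤ r := by exact_mod_cast hNr
  have hrpos : (2 + δ 0) < r * ε := (div_lt_iff₀ hε).1 (hN.trans_le hNr')
  have hr0 : r ≠ 0 := by
    rintro rfl
    have := hδ 0
    simp at hrpos
    linarith
  obtain ⟨m, rfl⟩ := Nat.exists_eq_succ_of_ne_zero hr0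
  have hnext : m + 1 < n (k + 1) := by
    have : m + 1 ≤ (E (n k)).sup id := Finset.le_sup (f := id) hrE
    rw [hstep]; omega
  -- The `m` vectors after the first one all have index greater than `m`.
  have htail : (m : ℝ) - δ 0 ≤ ‖∑ j ∈ Finset.range m, x (n (k + (j + 1)))‖ := by
    have h := hsm m (fun _ => 1) (by simp) (fun i => n (k + (i + 1)))
      (fun i j hij => hmono (Nat.add_lt_add_left (Nat.add_lt_add_right hij 1) k))
      (fun i => by
        have := hmono.monotone (show k + 1 ≤ k + ((i : ℕ) + 1) by omega)
        omega)
    have hsum : ‖∑ i ∈ Finset.range m, s i‖ = (m : ℝ) := by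
      rcases Nat.eq_zero_or_pos m with rfl | hm
      · simp
      · exact hl1 m hm
    simp only [one_smul] at h
    rw [Fin.sum_univ_eq_sum_range (fun i => x (n (k + (i + 1)))) m,
      Fin.sum_univ_eq_sum_range s m, hsum] at h
    have := (abs_lt.1 h).1
    have := hanti (Nat.zero_le m)
    linarith
  have htri : (m : ℝ) - δ 0 - 1 ≤ ‖∑ j ∈ Finset.range (m + 1), x (n (k + j))‖ := by
    rw [Finset.sum_range_succ']
    have h := norm_sub_le_norm_add (∑ j ∈ Finset.range m, x (n (k + (j + 1)))) (x (n (k + 0)))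
    rw [hnorm] at h
    linarith
  push_cast at hrpos ⊢
  rw [gt_iff_lt, one_div, inv_mul_eq_div, lt_div_iff₀ (by positivity)]
  nlinarith
end
end
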